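/- arXiv:1604.00577 — 11 statements merged into one kernel-verified Lean document; each statement's English description precedes it below -/
import Mathlib

section
/- Let β1 ≥ 2 be an integer and β2 = 2(β1 − 1). Let d1 < d2 < d3 < d4 < d5 be positive integers with σ1 = d1 + d2 + d3 + d4 + d5, let g be a positive integer, and let x_1,…,x_{β1}, y_1,…,y_{β2}, z_1,…,z_{β1} be positive integers with z_i = g − x_i for every i. Suppose there exist matrices b ∈ {0,1}^{β2×β1}, l ∈ {0,1}^{β1×β2} and nonnegative integer matrices c ∈ ℕ^{β2×4}, e ∈ ℕ^{β1×4} such that y_i = Σ_{j=1}^{β1} b_{ij}·x_j + Σ_{j=2}^{5} c_{ij}·d_j for all 1 ≤ i ≤ β2, and z_i = Σ_{j=1}^{β2} l_{ij}·y_j + Σ_{j=2}^{5} e_{ij}·d_j for all 1 ≤ i ≤ β1, and such that: for every j with 1 ≤ j ≤ β1 there is at least one i with b_{ij} = 1; for every j with 1 ≤ j ≤ β2 there is at least one i with l_{ij} = 1; for every j with 2 ≤ j ≤ 5 there is at least one i with c_{ij} ≥ 1; and for every j with 2 ≤ j ≤ 5 there is at least one i with e_{ij} ≥ 1. Then, writing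 X1 = Σ_{i=1}^{β1} x_i and Z1 = Σ_{i=1}^{β1} z_i, one has 2·X1 ≤ β1·g − 2(σ1 − d1) and 2·Z1 ≥ β1·g + 2(σ1 − d1). -/
/-!
If every column of a matrix `M` sums to at least `1`, then `w ↦ M *ᵥ w` does not decrease the total
of a nonnegative vector. Applied to both summands of `y = b *ᵥ x + c *ᵥ d` and of
`z = l *ᵥ y + e *ᵥ d`, this shows that each syzygy step raises the total degree by at least `∑ d`,
so `∑ z ≥ ∑ x + 2 ∑ d`. The symmetry `z i + x i = g` fixes `∑ z + ∑ x`, and adding `∑ x` or `∑ z`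
to both sides of that inequality gives the two bounds.
-/

theorem le_sum_of_exists_le {ι R : Type*} [Fintype ι] [AddCommMonoid R] [PartialOrder R]
    [IsOrderedAddMonoid R] [CanonicallyOrderedAdd R] {f : ι → R} {a : R} (h : ∃ i, a ≤ f i) :
    a ≤ ∑ i, f i :=
  let ⟨i, hi⟩ := h
  hi.trans (Finset.single_le_sum_of_canonicallyOrdered (Finset.mem_univ i))

theorem mulVec_vec4 {ι R : Type*} [NonUnitalNonAssocSemiring R] (M : Matrix ι (Fin 4) R)
    (v₀ v₁ v₂ v₃ : R) (i : ι) :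
    M.mulVec ![v₀, v₁, v₂, v₃] i = M i 0 * v₀ + M i 1 * v₁ + M i 2 * v₂ + M i 3 * v₃ := by
  simp only [Matrix.mulVec, dotProduct, Fin.sum_univ_four, Matrix.cons_val]

section OrderedSemiring

open Matrix

variable {ι κ τ R : Type*} [Fintype ι] [Fintype κ] [Fintype τ]
  [Semiring R] [PartialOrder R] [IsOrderedRing R]

theorem sum_le_sum_mulVec_of_one_le_sum {M : Matrix ι κ R} {w : κ → R} (hM : ∀ j, 1 ≤ ∑ i, M i j)
    (hw : ∀ j, 0 ≤ w j) : ∑ j, w j ≤ ∑ i, (M *ᵥ w) i :=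
  calc ∑ j, w j ≤ ∑ j, (∑ i, M i j) * w j :=
        Finset.sum_le_sum fun j _ => le_mul_of_one_le_left (hw j) (hM j)
    _ = ∑ j, ∑ i, M i j * w j := by simp only [Finset.sum_mul]
    _ = ∑ i, (M *ᵥ w) i := Finset.sum_comm

theorem sum_add_sum_le_sum_mulVec_add_mulVec {M : Matrix ι κ R} {N : Matrix ι τ R}
    {w : κ → R} {d : τ → R} (hM : ∀ j, 1 ≤ ∑ i, M i j) (hN : ∀ k, 1 ≤ ∑ i, N i k)
    (hw : ∀ j, 0 ≤ w j) (hd : ∀ k, 0 ≤ d k) :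
    ∑ j, w j + ∑ k, d k ≤ ∑ i, (M *ᵥ w + N *ᵥ d) i := by
  simp only [Pi.add_apply, Finset.sum_add_distrib]
  exact add_le_add (sum_le_sum_mulVec_of_one_le_sum hM hw)
    (sum_le_sum_mulVec_of_one_le_sum hN hd)

theorem sum_add_two_mul_sum_le_sum_of_eq_mulVec {ι' : Type*} [Fintype ι']
    {x : ι → R} {y : κ → R} {z : ι' → R} {d : τ → R}
    {b : Matrix κ ι R} {l : Matrix ι' κ R} {c : Matrix κ τ R} {e : Matrix ι' τ R}
    (hx : ∀ i, 0 ≤ x i) (hy : ∀ j, 0 ≤ y j) (hd : ∀ k, 0 ≤ d k)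
    (hy_eq : y = b *ᵥ x + c *ᵥ d) (hz_eq : z = l *ᵥ y + e *ᵥ d)
    (hb : ∀ i, 1 ≤ ∑ j, b j i) (hl : ∀ j, 1 ≤ ∑ i, l i j)
    (hc : ∀ k, 1 ≤ ∑ j, c j k) (he : ∀ k, 1 ≤ ∑ i, e i k) :
    ∑ i, x i + 2 * ∑ k, d k ≤ ∑ i, z i := by
  have hxy : ∑ i, x i + ∑ k, d k ≤ ∑ j, y j :=
    hy_eq ▸ sum_add_sum_le_sum_mulVec_add_mulVec hb hc hx hd
  have hyz : ∑ j, y j + ∑ k, d k ≤ ∑ i, z i :=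
    hz_eq ▸ sum_add_sum_le_sum_mulVec_add_mulVec hl he hy hd
  calc ∑ i, x i + 2 * ∑ k, d k = ∑ i, x i + ∑ k, d k + ∑ k, d k := by rw [two_mul, add_assoc]
    _ ≤ ∑ j, y j + ∑ k, d k := by gcongr
    _ ≤ ∑ i, z i := hyz

theorem stmt_0_general {x z : ι → R} {y : κ → R} {d : τ → R} {g : R}
    {b : Matrix κ ι R} {l : Matrix ι κ R} {c : Matrix κ τ R} {e : Matrix ι τ R}
    (hx : ∀ i, 0 ≤ x i) (hy : ∀ j, 0 ≤ y j) (hd : ∀ k, 0 ≤ d k) (hzx : ∀ i, z i + x i = g)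
    (hy_eq : y = b *ᵥ x + c *ᵥ d) (hz_eq : z = l *ᵥ y + e *ᵥ d)
    (hb : ∀ i, 1 ≤ ∑ j, b j i) (hl : ∀ j, 1 ≤ ∑ i, l i j)
    (hc : ∀ k, 1 ≤ ∑ j, c j k) (he : ∀ k, 1 ≤ ∑ i, e i k) :
    2 * ∑ i, x i + 2 * ∑ k, d k ≤ Fintype.card ι * g ∧
    Fintype.card ι * g + 2 * ∑ k, d k ≤ 2 * ∑ i, z i := by
  have hxz : ∑ i, x i + 2 * ∑ k, d k ≤ ∑ i, z i :=
    sum_add_two_mul_sum_le_sum_of_eq_mulVec hx hy hd hy_eq hz_eq hb hl hc he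
  have hsum : ∑ i, z i + ∑ i, x i = Fintype.card ι * g := by
    simp only [← Finset.sum_add_distrib, hzx, Finset.sum_const, Finset.card_univ, nsmul_eq_mul]
  rw [← hsum, two_mul (∑ i, x i), two_mul (∑ i, z i), add_assoc, add_assoc,
    add_comm (∑ i, z i) (∑ i, x i)]
  exact ⟨by gcongr, by gcongr⟩

end OrderedSemiring

/-- Lemma 1 (combinatorial content): bounds on the sums of first- and
third-syzygy degrees of a symmetric (not CI) numerical semigroup generated
by five elements. -/
theorem stmt_0
    (β1 : ℕ) (hβ1 : 2 ≤ β1)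
    (β2 : ℕ) (hβ2 : β2 = 2 * (β1 - 1))
    (d1 d2 d3 d4 d5 : ℕ) (hd1 : 0 < d1)
    (h12 : d1 < d2) (h23 : d2 < d3) (h34 : d3 < d4) (h45 : d4 < d5)
    (σ1 : ℕ) (hσ1 : σ1 = d1 + d2 + d3 + d4 + d5)
    (g : ℕ) (hg : 0 < g)
    (x z : Fin β1 → ℕ) (y : Fin β2 → ℕ)
    (hx : ∀ i, 0 < x i) (hy : ∀ i, 0 < y i) (hz : ∀ i, 0 < z i)
    (hzx : ∀ i, z i + x i = g)
    (b : Fin β2 → Fin β1 → ℕ) (l : Fin β1 → Fin β2 → ℕ)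
    (c : Fin β2 → Fin 4 → ℕ) (e : Fin β1 → Fin 4 → ℕ)
    (hb01 : ∀ i j, b i j ≤ 1) (hl01 : ∀ i j, l i j ≤ 1)
    (hy_eq : ∀ i, y i = (∑ j, b i j * x j) +
      (c i 0 * d2 + c i 1 * d3 + c i 2 * d4 + c i 3 * d5))
    (hz_eq : ∀ i, z i = (∑ j, l i j * y j) +
      (e i 0 * d2 + e i 1 * d3 + e i 2 * d4 + e i 3 * d5))
    (hbcol : ∀ j, ∃ i, b i j = 1)
    (hlcol : ∀ j, ∃ i, l i j = 1)
    (hccol : ∀ j : Fin 4, ∃ i, 1 ≤ c i j)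
    (hecol : ∀ j : Fin 4, ∃ i, 1 ≤ e i j) :
    2 * (∑ i, x i) + 2 * (σ1 - d1) ≤ β1 * g ∧
    β1 * g + 2 * (σ1 - d1) ≤ 2 * (∑ i, z i) := by
  have hσ : σ1 - d1 = ∑ k, ![d2, d3, d4, d5] k := by
    simp only [Fin.sum_univ_four, Matrix.cons_val]
    omega
  have hy_mulVec : y = (Matrix.of b).mulVec x + (Matrix.of c).mulVec ![d2, d3, d4, d5] :=
    funext fun i => by rw [Pi.add_apply, mulVec_vec4]; exact hy_eq i
  have hz_mulVec : z = (Matrix.of l).mulVec y + (Matrix.of e).mulVec ![d2, d3, d4, d5] :=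
    funext fun i => by rw [Pi.add_apply, mulVec_vec4]; exact hz_eq i
  simpa only [hσ, Fintype.card_fin, Nat.cast_id] using stmt_0_general
    (fun i => (hx i).le) (fun j => (hy j).le) (fun _ => Nat.zero_le _) hzx hy_mulVec hz_mulVec
    (fun i => le_sum_of_exists_le ((hbcol i).imp fun _ h => h.ge))
    (fun j => le_sum_of_exists_le ((hlcol j).imp fun _ h => h.ge))
    (fun k => le_sum_of_exists_le (hccol k)) (fun k => le_sum_of_exists_le (hecol k))
end

section
/- Let β1 > 4 be an integer and set χ = β1 − 1, u1⁻ = (β1 − √β1)/2, A = 2/(β1(β1−1)), B = 1/β1, C = (β1−2)(β1−3)/2, D = β1² − 5β1 + 7, E* = D − 2B·u1⁻ = (β1−2)(β1−3) + 1/√β1. Let g > 0 and π5 > 0 be reals, J(g) = χ(χ−1)(4χ−7)/32 + 6π5/g⁴, and Ψ3(g) = (√(E*² + 4A·(J(g) + C·u1⁻·(u1⁻ − 1))) − E*)/(2A). If 0 < u1 ≤ u1⁻ and u2 > 0 satisfy Φ(u1,u2) ≤ J(g), where Φ(u1,u2) = A·u2² − 2B·u1·u2 − C·u1² + D·u2 +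 C·u1, then u2 ≤ Ψ3(g). -/
/-!
The function `Φ(u₁, u₂)` depends on `u₁` through `-2 B u₁ u₂ - C u₁ (u₁ - 1)`. Since `t (t - 1)` is
symmetric about `1/2`, replacing `u₁` by a larger `u₁⁻` with `1 ≤ u₁ + u₁⁻` can only decrease `Φ`.
Hence `Φ(u₁, u₂) ≤ J` gives `Φ(u₁⁻, u₂) ≤ J`, a quadratic inequality in `u₂` alone with positive
leading coefficient `A`, and `Ψ₃` is the larger root of that quadratic. For `u₁⁻ = (β - √β) / 2`
and `u₁ ≥ 0`, the condition `1 ≤ u₁ + u₁⁻` is ensured by `β ≥ 4`.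
-/

section OrderedRing

variable {R : Type*} [CommRing R]

/-- The form `Φ(u, v)` of the master inequality, where `u` and `v` are the normalized symmetric
functions `u₁` and `u₂`. The coefficients, which the paper fixes as functions of the Betti number,
are kept as parameters. -/
def masterForm (A B C D u v : R) : R :=
  A * v ^ 2 - 2 * B * u * v - C * u ^ 2 + D * v + C * u

lemma masterForm_eq_quadratic (A B C D u v : R) :
    masterForm A B C D u v = A * v ^ 2 + (D - 2 * B * u) * v - C * u * (u - 1) := by
  unfold masterForm
  ring

variable [PartialOrder R] [IsOrderedRing R]

lemma mul_sub_one_le_mul_sub_one {u m : R} (hum : u ≤ m) (hsum : 1 ≤ u + m) :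
    u * (u - 1) ≤ m * (m - 1) := by
  have hprod : 0 ≤ (m - u) * (u + m - 1) :=
    mul_nonneg (sub_nonneg.2 hum) (sub_nonneg.2 hsum)
  linear_combination hprod

lemma masterForm_le_masterForm_of_le {A B C D u m v : R} (hB : 0 ≤ B) (hC : 0 ≤ C)
    (hv : 0 ≤ v) (hum : u ≤ m) (hsum : 1 ≤ u + m) :
    masterForm A B C D m v ≤ masterForm A B C D u v := by
  have hcross : B * v * u ≤ B * v * m := mul_le_mul_of_nonneg_left hum (mul_nonneg hB hv)
  have hsquare : C * (u * (u - 1)) ≤ C * (m * (m - 1)) :=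
    mul_le_mul_of_nonneg_left (mul_sub_one_le_mul_sub_one hum hsum) hC
  rw [masterForm_eq_quadratic, masterForm_eq_quadratic]
  linear_combination hcross + hcross + hsquare

end OrderedRing

lemma le_larger_root_of_quadratic_le {a b c x : ℝ} (ha : 0 < a) (h : a * x ^ 2 + b * x ≤ c) :
    x ≤ (√(b ^ 2 + 4 * a * c) - b) / (2 * a) := by
  have hsq : (2 * a * x + b) ^ 2 ≤ b ^ 2 + 4 * a * c :=
    calc (2 * a * x + b) ^ 2 = b ^ 2 + 4 * a * (a * x ^ 2 + b * x) := by ring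
      _ ≤ b ^ 2 + 4 * a * c := by gcongr
  rw [le_div_iff₀' (by positivity), le_sub_iff_add_le]
  exact Real.le_sqrt_of_sq_le hsq

lemma le_larger_root_of_masterForm_le {A B C D J u m v : ℝ} (hA : 0 < A) (hB : 0 ≤ B)
    (hC : 0 ≤ C) (hv : 0 ≤ v) (hum : u ≤ m) (hsum : 1 ≤ u + m)
    (hΦ : masterForm A B C D u v ≤ J) :
    v ≤ (√((D - 2 * B * m) ^ 2 + 4 * A * (J + C * m * (m - 1))) - (D - 2 * B * m)) /
      (2 * A) := by
  have hΦm : masterForm A B C D m v ≤ J :=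
    (masterForm_le_masterForm_of_le hB hC hv hum hsum).trans hΦ
  rw [masterForm_eq_quadratic, sub_le_iff_le_add] at hΦm
  exact le_larger_root_of_quadratic_le hA hΦm

lemma one_le_sub_sqrt_div_two {β : ℝ} (hβ : 4 ≤ β) : 1 ≤ (β - √β) / 2 := by
  have hsqrt : 2 ≤ √β := Real.le_sqrt_of_sq_le (by linarith)
  have hsq : √β ^ 2 = β := Real.sq_sqrt (by linarith)
  have hfactor : 0 ≤ (√β - 2) * (√β + 1) := mul_nonneg (by linarith) (by linarith)
  linarith

theorem stmt_2_general {β : ℝ} (hβ : 4 ≤ β) {A B C D Estar u1m J Ψ3 u1 u2 : ℝ}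
    (hA : A = 2 / (β * (β - 1))) (hB : B = 1 / β) (hC : C = (β - 2) * (β - 3) / 2)
    (hu1m : u1m = (β - √β) / 2) (hE : Estar = D - 2 * B * u1m)
    (hΨ3 : Ψ3 = (√(Estar ^ 2 + 4 * A * (J + C * u1m * (u1m - 1))) - Estar) / (2 * A))
    (hu1 : 0 ≤ u1) (hu1le : u1 ≤ u1m) (hu2 : 0 ≤ u2)
    (hΦ : masterForm A B C D u1 u2 ≤ J) :
    u2 ≤ Ψ3 := by
  have hβ_sub_one : 0 < β - 1 := by linarith
  have hβ_sub_two : 0 < β - 2 := by linarith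
  have hβ_sub_three : 0 < β - 3 := by linarith
  have hApos : 0 < A := by rw [hA]; positivity
  have hBnonneg : 0 ≤ B := by rw [hB]; positivity
  have hCnonneg : 0 ≤ C := by rw [hC]; positivity
  have hsum : 1 ≤ u1 + u1m := by
    rw [hu1m]
    exact le_add_of_nonneg_of_le hu1 (one_le_sub_sqrt_div_two hβ)
  rw [hΨ3, hE]
  exact le_larger_root_of_masterForm_le hApos hBnonneg hCnonneg hu2 hu1le hsum hΦ

/-- First step of the proof of Lemma 3: in the range 0 < u1 ≤ u1⁻, the master
inequality Φ(u1,u2) ≤ J(g) implies u2 ≤ Ψ3(g). -/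
theorem stmt_2 (β1 : ℕ) (hβ1 : 4 < β1)
    (g π5 : ℝ) (hg : 0 < g) (hπ5 : 0 < π5)
    (χ A B C D Estar u1m J Ψ3 u1 u2 : ℝ)
    (hχ : χ = (β1 : ℝ) - 1)
    (hA : A = 2 / ((β1 : ℝ) * ((β1 : ℝ) - 1)))
    (hB : B = 1 / (β1 : ℝ))
    (hC : C = ((β1 : ℝ) - 2) * ((β1 : ℝ) - 3) / 2)
    (hD : D = (β1 : ℝ) ^ 2 - 5 * (β1 : ℝ) + 7)
    (hu1m : u1m = ((β1 : ℝ) - Real.sqrt β1) / 2)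
    (hE : Estar = D - 2 * B * u1m)
    (hJ : J = χ * (χ - 1) * (4 * χ - 7) / 32 + 6 * π5 / g ^ 4)
    (hΨ3 : Ψ3 = (Real.sqrt (Estar ^ 2 + 4 * A * (J + C * u1m * (u1m - 1))) - Estar)
      / (2 * A))
    (hu1pos : 0 < u1) (hu1le : u1 ≤ u1m) (hu2 : 0 < u2)
    (hΦ : A * u2 ^ 2 - 2 * B * u1 * u2 - C * u1 ^ 2 + D * u2 + C * u1 ≤ J) :
    u2 ≤ Ψ3 :=
  stmt_2_general (by exact_mod_cast hβ1.le) hA hB hC hu1m hE hΨ3 hu1pos.le hu1le hu2.le hΦ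
end

section
/- Let β1 > 4 be an integer and set χ = β1 − 1, u1⁻ = (β1 − √β1)/2, u2* = (χ/(2β1))·(u1⁻)², A = 2/(β1(β1−1)), C = (β1−2)(β1−3)/2, E* = (β1−2)(β1−3) + 1/√β1. Let g > 0 and π5 > 0 be reals and J(g) = χ(χ−1)(4χ−7)/32 + 6π5/g⁴. Then the inequality A·(u2*)² + E*·u2* ≥ J(g) + C·u1⁻·(u1⁻ − 1) holds if and only if g ≥ g_s, where g_s = 4·λ(β1)·π5^{1/4} and λ(β1) = (3β1/(4(β1−1)))^{1/4}, i.e. g_s⁴ = 192·β1·π5/(β1 − 1). Moreover λ(β1) < 1. -/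
/-!
Write `β = s ^ 2`. Once the factor `(β - 1) / (32 β)` is pulled out, `s` enters the inequality only
through `(s - 1) ^ 4 + 4 s (s - 1) ^ 2 = (β - 1) ^ 2`, and what remains is the identity
`(β - 1) ^ 2 + 4 β (β - 2) (β - 3) - β (β - 2) (4 β - 11) = 1`. So the inequality says
`6 π5 / g ^ 4 ≤ (β - 1) / (32 β)`, which is `g_s ^ 4 ≤ g ^ 4`.
-/

namespace MasterInequality

/-- The abscissa `u₁⁻`, which ends the range `0 < u₁ ≤ u₁⁻`, as a function of a real Betti
number `β`. -/
noncomputable def uMinus (β : ℝ) : ℝ := (β - √β) / 2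

/-- The bound `u₂*` against which the master inequality is tested. -/
noncomputable def uStar (β : ℝ) : ℝ := (β - 1) / (2 * β) * uMinus β ^ 2

/-- The coefficient `A` of `u₂ ^ 2` in the master inequality. -/
noncomputable def quadraticCoeff (β : ℝ) : ℝ := 2 / (β * (β - 1))

/-- The coefficient `E*` of `u₂` in the master inequality at `u₁ = u₁⁻`. -/
noncomputable def linearCoeff (β : ℝ) : ℝ := (β - 2) * (β - 3) + 1 / √β

/-- The coefficient `C` of `u₁ (u₁ - 1)` in the master inequality. -/
noncomputable def crossCoeff (β : ℝ) : ℝ := (β - 2) * (β - 3) / 2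

/-- The term `J(g)` of the master inequality, the only one involving the top degree `g` and the
product `π5` of the generators. Its first argument is `χ = β - 1`. -/
noncomputable def degreeTerm (χ π5 g : ℝ) : ℝ := χ * (χ - 1) * (4 * χ - 7) / 32 + 6 * π5 / g ^ 4

/-- The factor `λ(β)` of the lower bound `g_s`. -/
noncomputable def boundFactor (β : ℝ) : ℝ := (3 * β / (4 * (β - 1))) ^ ((1 : ℝ) / 4)

/-- The lower bound `g_s` for the top degree. -/
noncomputable def degreeBound (β π5 : ℝ) : ℝ := 4 * boundFactor β * π5 ^ ((1 : ℝ) / 4)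

theorem uMinus_sq {s : ℝ} (hs : 0 ≤ s) : uMinus (s ^ 2) = s * (s - 1) / 2 := by
  rw [uMinus, Real.sqrt_sq hs]
  ring

theorem uStar_sq {s : ℝ} (hs : 0 < s) : uStar (s ^ 2) = (s ^ 2 - 1) * (s - 1) ^ 2 / 8 := by
  rw [uStar, uMinus_sq hs.le]
  field_simp
  ring

theorem linearCoeff_sq {s : ℝ} (hs : 0 ≤ s) :
    linearCoeff (s ^ 2) = (s ^ 2 - 2) * (s ^ 2 - 3) + 1 / s := by
  rw [linearCoeff, Real.sqrt_sq hs]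

theorem quadraticCoeff_mul_uStar_sq {s : ℝ} (hs : 1 < s) :
    quadraticCoeff (s ^ 2) * uStar (s ^ 2) ^ 2 =
      (s ^ 2 - 1) / (32 * s ^ 2) * (s - 1) ^ 4 := by
  have : s ^ 2 - 1 ≠ 0 := by nlinarith
  rw [quadraticCoeff, uStar_sq (by linarith)]
  field_simp
  ring

theorem linearCoeff_mul_uStar_sub_crossCoeff_mul_uMinus {s : ℝ} (hs : 0 < s) :
    linearCoeff (s ^ 2) * uStar (s ^ 2) -
        crossCoeff (s ^ 2) * uMinus (s ^ 2) * (uMinus (s ^ 2) - 1) =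
      (s ^ 2 - 1) / (32 * s ^ 2) *
        (4 * s ^ 2 * (s ^ 2 - 2) * (s ^ 2 - 3) + 4 * s * (s - 1) ^ 2) := by
  rw [linearCoeff_sq hs.le, uStar_sq hs, crossCoeff, uMinus_sq hs.le]
  field_simp
  ring

theorem sub_one_pow_four_add {R : Type*} [CommRing R] (s : R) :
    (s - 1) ^ 4 + 4 * s * (s - 1) ^ 2 = (s ^ 2 - 1) ^ 2 := by
  ring

theorem sub_one_sq_add_four_mul {R : Type*} [CommRing R] (β : R) :
    (β - 1) ^ 2 + 4 * β * (β - 2) * (β - 3) = β * (β - 2) * (4 * β - 11) + 1 := by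
  ring

theorem quadratic_at_uStar_sub_cross_at_uMinus {β : ℝ} (hβ : 1 < β) :
    quadraticCoeff β * uStar β ^ 2 + linearCoeff β * uStar β -
        crossCoeff β * uMinus β * (uMinus β - 1) =
      (β - 1) * (β - 2) * (4 * β - 11) / 32 + (β - 1) / (32 * β) := by
  obtain ⟨s, hs, rfl⟩ : ∃ s, 1 < s ∧ s ^ 2 = β :=
    ⟨√β, Real.lt_sqrt_of_sq_lt (by linarith), Real.sq_sqrt (by linarith)⟩
  have hs₀ : 0 < s := by linarith
  calc
    _ = (s ^ 2 - 1) / (32 * s ^ 2) * ((s - 1) ^ 4 + 4 * s * (s - 1) ^ 2 +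
          4 * s ^ 2 * (s ^ 2 - 2) * (s ^ 2 - 3)) := by
      rw [add_sub_assoc, quadraticCoeff_mul_uStar_sq hs,
        linearCoeff_mul_uStar_sub_crossCoeff_mul_uMinus hs₀]
      ring
    _ = (s ^ 2 - 1) / (32 * s ^ 2) * (s ^ 2 * (s ^ 2 - 2) * (4 * s ^ 2 - 11) + 1) := by
      rw [sub_one_pow_four_add, sub_one_sq_add_four_mul]
    _ = _ := by field_simp

theorem degreeTerm_add_cross_le_iff {β : ℝ} (hβ : 1 < β) (π5 g : ℝ) :
    degreeTerm (β - 1) π5 g + crossCoeff β * uMinus β * (uMinus β - 1) ≤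
        quadraticCoeff β * uStar β ^ 2 + linearCoeff β * uStar β ↔
      6 * π5 / g ^ 4 ≤ (β - 1) / (32 * β) := by
  have hdegree : degreeTerm (β - 1) π5 g =
      (β - 1) * (β - 2) * (4 * β - 11) / 32 + 6 * π5 / g ^ 4 := by
    rw [degreeTerm]
    ring
  rw [← le_sub_iff_add_le, quadratic_at_uStar_sub_cross_at_uMinus hβ, hdegree,
    add_le_add_iff_left]

theorem rpow_one_div_natCast_pow {x : ℝ} (hx : 0 ≤ x) {n : ℕ} (hn : n ≠ 0) :
    (x ^ (1 / (n : ℝ))) ^ n = x := by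
  rw [one_div, Real.rpow_inv_natCast_pow hx hn]

theorem boundFactor_pow_four {β : ℝ} (hβ : 1 < β) :
    boundFactor β ^ 4 = 3 * β / (4 * (β - 1)) := by
  have : 0 < β - 1 := sub_pos.2 hβ
  exact rpow_one_div_natCast_pow (by positivity) four_ne_zero

theorem boundFactor_nonneg {β : ℝ} (hβ : 1 < β) : 0 ≤ boundFactor β := by
  have : 0 < β - 1 := sub_pos.2 hβ
  unfold boundFactor
  positivity

theorem boundFactor_lt_one_iff {β : ℝ} (hβ : 1 < β) : boundFactor β < 1 ↔ 4 < β := by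
  have : 0 < β - 1 := sub_pos.2 hβ
  rw [boundFactor, Real.rpow_lt_one_iff' (by positivity) (by norm_num), div_lt_one (by positivity)]
  constructor <;> intro h <;> linarith

theorem degreeBound_nonneg {β π5 : ℝ} (hβ : 1 < β) (hπ5 : 0 ≤ π5) : 0 ≤ degreeBound β π5 := by
  have := boundFactor_nonneg hβ
  unfold degreeBound
  positivity

theorem degreeBound_pow_four {β π5 : ℝ} (hβ : 1 < β) (hπ5 : 0 ≤ π5) :
    degreeBound β π5 ^ 4 = 192 * β * π5 / (β - 1) := by
  have hroot : (π5 ^ ((1 : ℝ) / 4)) ^ 4 = π5 := rpow_one_div_natCast_pow hπ5 four_ne_zero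
  rw [degreeBound, mul_pow, mul_pow, boundFactor_pow_four hβ, hroot]
  field_simp
  ring

theorem degreeBound_le_iff {β π5 g : ℝ} (hβ : 1 < β) (hπ5 : 0 ≤ π5) (hg : 0 < g) :
    degreeBound β π5 ≤ g ↔ 6 * π5 / g ^ 4 ≤ (β - 1) / (32 * β) := by
  have : 0 < β - 1 := sub_pos.2 hβ
  rw [← pow_le_pow_iff_left₀ (degreeBound_nonneg hβ hπ5) hg.le four_ne_zero,
    degreeBound_pow_four hβ hπ5, div_le_iff₀ (by positivity),
    div_le_div_iff₀ (by positivity) (by positivity)]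
  constructor <;> intro h <;> linarith

end MasterInequality

open MasterInequality in
theorem stmt_3_general {β π5 g : ℝ} (hβ : 1 < β) (hπ5 : 0 ≤ π5) (hg : 0 < g) :
    (quadraticCoeff β * uStar β ^ 2 + linearCoeff β * uStar β ≥
        degreeTerm (β - 1) π5 g + crossCoeff β * uMinus β * (uMinus β - 1) ↔
      degreeBound β π5 ≤ g) ∧
    degreeBound β π5 ^ 4 = 192 * β * π5 / (β - 1) ∧
    (boundFactor β < 1 ↔ 4 < β) :=
  ⟨(degreeTerm_add_cross_le_iff hβ π5 g).trans (degreeBound_le_iff hβ hπ5 hg).symm,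
    degreeBound_pow_four hβ hπ5, boundFactor_lt_one_iff hβ⟩

/-- Core computation of Lemma 3: the consistency condition is equivalent to
g ≥ g_s = 4·λ(β1)·π5^{1/4}, with g_s⁴ = 192·β1·π5/(β1−1) and λ(β1) < 1. -/
theorem stmt_3 (β1 : ℕ) (hβ1 : 4 < β1)
    (g π5 : ℝ) (hg : 0 < g) (hπ5 : 0 < π5)
    (χ u1m u2s A C Estar J gs lam : ℝ)
    (hχ : χ = (β1 : ℝ) - 1)
    (hu1m : u1m = ((β1 : ℝ) - Real.sqrt β1) / 2)
    (hu2s : u2s = χ / (2 * (β1 : ℝ)) * u1m ^ 2)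
    (hA : A = 2 / ((β1 : ℝ) * ((β1 : ℝ) - 1)))
    (hC : C = ((β1 : ℝ) - 2) * ((β1 : ℝ) - 3) / 2)
    (hE : Estar = ((β1 : ℝ) - 2) * ((β1 : ℝ) - 3) + 1 / Real.sqrt β1)
    (hJ : J = χ * (χ - 1) * (4 * χ - 7) / 32 + 6 * π5 / g ^ 4)
    (hlam : lam = (3 * (β1 : ℝ) / (4 * ((β1 : ℝ) - 1))) ^ ((1 : ℝ) / 4))
    (hgs : gs = 4 * lam * π5 ^ ((1 : ℝ) / 4)) :
    (A * u2s ^ 2 + Estar * u2s ≥ J + C * u1m * (u1m - 1) ↔ gs ≤ g) ∧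
    gs ^ 4 = 192 * (β1 : ℝ) * π5 / ((β1 : ℝ) - 1) ∧
    lam < 1 := by
  have hβ : (4 : ℝ) < β1 := by exact_mod_cast hβ1
  subst hχ hu1m hu2s hA hC hE hJ hlam hgs
  have ⟨consistent_iff, bound_pow_four, factor_lt_one_iff⟩ :=
    stmt_3_general (β := β1) (by linarith) hπ5.le hg
  exact ⟨consistent_iff, bound_pow_four, factor_lt_one_iff.2 hβ⟩
end

section
/- Let β1 > 4 be an integer, χ = β1 − 1, and let g > 0, π5 > 0 be reals; set J(g) = χ(χ−1)(4χ−7)/32 + 6π5/g⁴, A = 2/(β1(β1−1)), B = 1/β1, C = (β1−2)(β1−3)/2, D = β1² − 5β1 + 7, E(u1) = D − 2B·u1, Φ(u1,u2) = A·u2² − 2B·u1·u2 − C·u1² + D·u2 + C·u1, and Ψ4^±(u1,g) = (±√(E(u1)² + 4A·(J(g) + C·u1·(u1−1))) − E(u1))/(2A). Then for every real u1 with u1 > u1⁻ = (β1 − √β1)/2 (note u1⁻ > 1 since β1 > 4), the two roots of the quadratic equation Φ(u1,u2) = J(g) in u2 satisfy Ψ4⁻(u1,g) < 0 < Ψ4⁺(u1,g),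 and for every u2 > 0 one has the equivalence: Φ(u1,u2) ≤ J(g) if and only if u2 ≤ Ψ4⁺(u1,g). -/
/-!
As a quadratic in `u2`, `Φ(u1, u2) - J` has leading coefficient `A > 0` and constant term
`-(J + C u1 (u1 - 1))`. The latter is negative for every `u1`: the summand `C u1 (u1 - 1)` is at
least `-C / 4`, which the cubic term of `J` outweighs. So `0` lies strictly between the two roots
of the quadratic, and the quadratic is nonpositive exactly between them.
-/

section Quadratic

theorem quadratic_eq_mul_sub_mul_sub {K : Type*} [Field K] [NeZero (2 : K)] {a b c s : K}
    (ha : a ≠ 0) (hs : discrim a b c = s ^ 2) (x : K) :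
    a * x ^ 2 + b * x + c = a * ((x - (-s - b) / (2 * a)) * (x - (s - b) / (2 * a))) := by
  rw [discrim] at hs
  have h2 : (2 : K) ≠ 0 := NeZero.ne 2
  field_simp
  linear_combination -hs

theorem quadratic_nonpos_iff_mem_Icc {K : Type*} [Field K] [LinearOrder K] [IsStrictOrderedRing K]
    {a b c s : K} (ha : 0 < a) (hs₀ : 0 ≤ s) (hs : discrim a b c = s ^ 2) (x : K) :
    a * x ^ 2 + b * x + c ≤ 0 ↔ x ∈ Set.Icc ((-s - b) / (2 * a)) ((s - b) / (2 * a)) := by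
  have roots_le : (-s - b) / (2 * a) ≤ (s - b) / (2 * a) := by
    gcongr
    exact neg_le_self hs₀
  rw [quadratic_eq_mul_sub_mul_sub ha.ne' hs, ← mul_zero a, mul_le_mul_iff_right₀ ha,
    sub_mul_sub_nonpos_iff x roots_le, Set.mem_Icc]

theorem sq_lt_discrim {R : Type*} [CommRing R] [LinearOrder R] [IsStrictOrderedRing R] {a c : R}
    (hac : a * c < 0) (b : R) : b ^ 2 < discrim a b c := by
  rw [discrim]
  linarith

variable {a c : ℝ}

theorem abs_lt_sqrt_discrim (hac : a * c < 0) (b : ℝ) : |b| < √(discrim a b c) :=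
  Real.lt_sqrt_of_sq_lt ((sq_abs b).trans_lt (sq_lt_discrim hac b))

theorem smaller_quadratic_root_neg (ha : 0 < a) (hc : c < 0) (b : ℝ) :
    (-√(discrim a b c) - b) / (2 * a) < 0 := by
  have h := (abs_lt.mp (abs_lt_sqrt_discrim (mul_neg_of_pos_of_neg ha hc) b)).1
  exact div_neg_of_neg_of_pos (by linarith) (by positivity)

theorem larger_quadratic_root_pos (ha : 0 < a) (hc : c < 0) (b : ℝ) :
    0 < (√(discrim a b c) - b) / (2 * a) := by
  have h := (abs_lt.mp (abs_lt_sqrt_discrim (mul_neg_of_pos_of_neg ha hc) b)).2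
  exact div_pos (sub_pos.mpr h) (by positivity)

end Quadratic

theorem cubic_add_mul_sub_one_pos {K : Type*} [Field K] [LinearOrder K] [IsStrictOrderedRing K]
    {χ : K} (hχ : 2 ≤ χ) (u : K) :
    0 < χ * (χ - 1) * (4 * χ - 7) / 32 + (χ - 1) * (χ - 2) / 2 * u * (u - 1) := by
  have hχ₁ : 0 < χ - 1 := by linarith
  have hχ₂ : 0 ≤ (χ - 2) / 2 := by linarith
  calc 0 < (χ - 1) * ((χ - 2) / 2 * (u - 1 / 2) ^ 2 + ((2 * χ - 11 / 4) ^ 2 + 7 / 16) / 32) :=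
        mul_pos hχ₁ (add_pos_of_nonneg_of_pos (mul_nonneg hχ₂ (sq_nonneg _)) (by positivity))
    _ = χ * (χ - 1) * (4 * χ - 7) / 32 + (χ - 1) * (χ - 2) / 2 * u * (u - 1) := by ring

theorem stmt_4_general {β1 : ℝ} (hβ1 : 3 ≤ β1) {χ A B C D J : ℝ}
    (hχ : χ = β1 - 1)
    (hA : A = 2 / (β1 * (β1 - 1)))
    (hC : C = (β1 - 2) * (β1 - 3) / 2)
    (hJ : χ * (χ - 1) * (4 * χ - 7) / 32 ≤ J)
    {E : ℝ → ℝ} (hE : ∀ u1, E u1 = D - 2 * B * u1)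
    {Φ : ℝ → ℝ → ℝ}
    (hΦ : ∀ u1 u2, Φ u1 u2 = A * u2 ^ 2 - 2 * B * u1 * u2 - C * u1 ^ 2
      + D * u2 + C * u1)
    {Ψ4p Ψ4m : ℝ → ℝ}
    (hΨ4p : ∀ u1, Ψ4p u1 =
      (√(E u1 ^ 2 + 4 * A * (J + C * u1 * (u1 - 1))) - E u1) / (2 * A))
    (hΨ4m : ∀ u1, Ψ4m u1 =
      (-√(E u1 ^ 2 + 4 * A * (J + C * u1 * (u1 - 1))) - E u1) / (2 * A))
    (u1 : ℝ) :
    Ψ4m u1 < 0 ∧ 0 < Ψ4p u1 ∧ ∀ u2, Φ u1 u2 ≤ J ↔ u2 ∈ Set.Icc (Ψ4m u1) (Ψ4p u1) := by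
  have A_pos : 0 < A := by
    have : 0 < β1 - 1 := by linarith
    rw [hA]
    positivity
  have C_eq : C = (χ - 1) * (χ - 2) / 2 := by rw [hC, hχ]; ring
  have constant_neg : -(J + C * u1 * (u1 - 1)) < 0 := by
    have := cubic_add_mul_sub_one_pos (show 2 ≤ χ by linarith) u1
    rw [C_eq]
    linarith
  have discrim_eq : E u1 ^ 2 + 4 * A * (J + C * u1 * (u1 - 1)) =
      discrim A (E u1) (-(J + C * u1 * (u1 - 1))) := by rw [discrim]; ring
  have discrim_nonneg : 0 ≤ discrim A (E u1) (-(J + C * u1 * (u1 - 1))) :=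
    (sq_nonneg _).trans (sq_lt_discrim (mul_neg_of_pos_of_neg A_pos constant_neg) _).le
  have Φ_sub_J (u2 : ℝ) :
      Φ u1 u2 - J = A * u2 ^ 2 + E u1 * u2 + -(J + C * u1 * (u1 - 1)) := by
    rw [hΦ, hE]
    ring
  rw [hΨ4p, hΨ4m, discrim_eq]
  refine ⟨smaller_quadratic_root_neg A_pos constant_neg _,
    larger_quadratic_root_pos A_pos constant_neg _, fun u2 ↦ ?_⟩
  rw [← sub_nonpos, Φ_sub_J]
  exact quadratic_nonpos_iff_mem_Icc A_pos (Real.sqrt_nonneg _)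
    (Real.sq_sqrt discrim_nonneg).symm u2

/-- Proposition 1: for u1 > u1⁻, the two roots Ψ4^±(u1,g) of the quadratic
Φ(u1,·) = J(g) have opposite signs, and for u2 > 0 the master inequality
Φ(u1,u2) ≤ J(g) is equivalent to u2 ≤ Ψ4⁺(u1,g). -/
theorem stmt_4 (β1 : ℕ) (hβ1 : 4 < β1)
    (g π5 : ℝ) (hg : 0 < g) (hπ5 : 0 < π5)
    (χ A B C D J : ℝ)
    (hχ : χ = (β1 : ℝ) - 1)
    (hA : A = 2 / ((β1 : ℝ) * ((β1 : ℝ) - 1)))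
    (hB : B = 1 / (β1 : ℝ))
    (hC : C = ((β1 : ℝ) - 2) * ((β1 : ℝ) - 3) / 2)
    (hD : D = (β1 : ℝ) ^ 2 - 5 * (β1 : ℝ) + 7)
    (hJ : J = χ * (χ - 1) * (4 * χ - 7) / 32 + 6 * π5 / g ^ 4)
    (E : ℝ → ℝ) (hE : ∀ u1, E u1 = D - 2 * B * u1)
    (Φ : ℝ → ℝ → ℝ)
    (hΦ : ∀ u1 u2, Φ u1 u2 = A * u2 ^ 2 - 2 * B * u1 * u2 - C * u1 ^ 2
      + D * u2 + C * u1)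
    (Ψ4p Ψ4m : ℝ → ℝ)
    (hΨ4p : ∀ u1, Ψ4p u1 =
      (Real.sqrt (E u1 ^ 2 + 4 * A * (J + C * u1 * (u1 - 1))) - E u1) / (2 * A))
    (hΨ4m : ∀ u1, Ψ4m u1 =
      (-Real.sqrt (E u1 ^ 2 + 4 * A * (J + C * u1 * (u1 - 1))) - E u1) / (2 * A)) :
    ∀ u1 : ℝ, ((β1 : ℝ) - Real.sqrt β1) / 2 < u1 →
      Ψ4m u1 < 0 ∧ 0 < Ψ4p u1 ∧
      ∀ u2 : ℝ, 0 < u2 → (Φ u1 u2 ≤ J ↔ u2 ≤ Ψ4p u1) := by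
  intro u1 _
  have cubic_le_J : χ * (χ - 1) * (4 * χ - 7) / 32 ≤ J := by
    rw [hJ]
    exact le_add_of_nonneg_right (by positivity)
  obtain ⟨hm, hp, hΦ_le⟩ := stmt_4_general (by exact_mod_cast (by lia : 3 ≤ β1))
    hχ hA hC cubic_le_J hE hΦ hΨ4p hΨ4m u1
  exact ⟨hm, hp, fun u2 hu2 ↦ (hΦ_le u2).trans (and_iff_right (hm.trans hu2).le)⟩
end

section
/- Let β1 > 4 be an integer, χ = β1 − 1, π5 > 0 a real, and let ε be a real with 0 < ε ≤ √β1/2; set u1⁻ = (β1 − √β1)/2, u_⊙ = β1/2 − ε, u2* = (χ/(2β1))·(u1⁻)², Ψ2(u1) = (1/2)(u1² − u1 + χ/4), g_s = 4·(3β1/(4(β1−1)))^{1/4}·π5^{1/4}, and let Ψ4⁺(u1,g) = (√(E(u1)² + 4A·(J(g) + C·u1·(u1−1))) − E(u1))/(2A) with A = 2/(β1(β1−1)), B = 1/β1, C = (β1−2)(β1−3)/2, D = β1² − 5β1 + 7, E(u1) = D − 2B·u1, J(g) = χ(χ−1)(4χ−7)/32 + 6π5/g⁴. Then: for every real g > g_s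 and every u1 with u1⁻ ≤ u1 ≤ u_⊙, one has Ψ4⁺(u1,g) < Ψ2(u1); and at g = g_s one has the equality Ψ4⁺(u1⁻, g_s) = u2*. -/
/-!
`Ψ4⁺(u, g)` is the larger root of `Φ(u, ·) = J(g)`. Since `Φ(u, ·)` is an upward parabola that is
increasing at `Ψ2(u)`, the bound `Ψ4⁺(u, g) < Ψ2(u)` amounts to `J(g) < Φ(u, Ψ2(u))`. The value
`g_s` is the one for which `Φ(u, Ψ2(u)) - J(g_s)` factors: with `t = (u - β / 2)²` it equals
`(t - β / 4) (t - (β - 2) (2 β - 3) / 4) / (2 β (β - 1))`. For `t ≤ β / 4` both factors are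
nonpositive, with a zero at `t = β / 4`, that is, at `u = u1⁻`; moreover `J` decreases in `g`.
-/

namespace MasterQuadratic

/-- The larger root of `a x² + e x = k` for `0 < a`. When the discriminant is negative, `√` is `0`
and this is the vertex of the parabola. -/
noncomputable def upperRoot (a e k : ℝ) : ℝ := (√(e ^ 2 + 4 * a * k) - e) / (2 * a)

lemma upperRoot_lt_iff {a e k x : ℝ} (ha : 0 < a) (hx : 0 < 2 * a * x + e) :
    upperRoot a e k < x ↔ k < a * x ^ 2 + e * x := by
  have hsq : (2 * a * x + e) ^ 2 - (e ^ 2 + 4 * a * k) = 4 * a * (a * x ^ 2 + e * x - k) := by ring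
  rw [upperRoot, div_lt_iff₀' (by positivity), sub_lt_iff_lt_add, Real.sqrt_lt' hx, ← sub_pos, hsq,
    mul_pos_iff_of_pos_left (by positivity), sub_pos]

lemma upperRoot_eval {a e x : ℝ} (ha : a ≠ 0) (hx : 0 ≤ 2 * a * x + e) :
    upperRoot a e (a * x ^ 2 + e * x) = x := by
  have hsq : e ^ 2 + 4 * a * (a * x ^ 2 + e * x) = (2 * a * x + e) ^ 2 := by ring
  rw [upperRoot, hsq, Real.sqrt_sq hx, add_sub_cancel_right, mul_div_cancel_left₀ x (by simpa)]

/-- The leading coefficient `A` of the master quadratic, for Betti number `β`. -/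
noncomputable def coeffA (β : ℝ) : ℝ := 2 / (β * (β - 1))

/-- The coefficient `C` of `u (u - 1)` in the master quadratic. -/
noncomputable def coeffC (β : ℝ) : ℝ := (β - 2) * (β - 3) / 2

/-- The linear coefficient `E(u) = D - 2 B u` of the master quadratic, with `B = 1 / β` and
`D = β² - 5 β + 7`. -/
noncomputable def coeffE (β u : ℝ) : ℝ := β ^ 2 - 5 * β + 7 - 2 * (1 / β) * u

/-- The right-hand side `J(g)` of the master equation, with `χ` written out as `β - 1`; `π₅` is the
product of the generators. -/
noncomputable def levelJ (β π₅ g : ℝ) : ℝ :=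
  (β - 1) * (β - 1 - 1) * (4 * (β - 1) - 7) / 32 + 6 * π₅ / g ^ 4

/-- The master quadratic `Φ(u, ·)`. -/
noncomputable def formPhi (β u x : ℝ) : ℝ :=
  coeffA β * x ^ 2 + coeffE β u * x - coeffC β * u * (u - 1)

/-- The upper bound `Ψ2`. -/
noncomputable def psi2 (β u : ℝ) : ℝ := 1 / 2 * (u ^ 2 - u + (β - 1) / 4)

/-- The root `Ψ4⁺(u, g)` of the master equation `Φ(u, ·) = J(g)`. -/
noncomputable def psi4Plus (β π₅ u g : ℝ) : ℝ :=
  upperRoot (coeffA β) (coeffE β u) (levelJ β π₅ g + coeffC β * u * (u - 1))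

/-- The candidate lower bound `g_s`. -/
noncomputable def gLower (β π₅ : ℝ) : ℝ :=
  4 * (3 * β / (4 * (β - 1))) ^ ((1 : ℝ) / 4) * π₅ ^ ((1 : ℝ) / 4)

/-- The left end `u1⁻` of the range of `u`. -/
noncomputable def uMinus (β : ℝ) : ℝ := (β - √β) / 2

variable {β π₅ g u : ℝ}

lemma coeffA_pos (hβ : 1 < β) : 0 < coeffA β :=
  div_pos two_pos (mul_pos (by linarith) (by linarith))

lemma formPhi_deriv_psi2_pos (hβ : 2 ≤ β) (u : ℝ) :
    0 < 2 * coeffA β * psi2 β u + coeffE β u := by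
  have hβ0 : β ≠ 0 := by linarith
  have hβ1 : β - 1 ≠ 0 := by linarith
  have complete_square : 2 * coeffA β * psi2 β u + coeffE β u = coeffA β *
      ((u - β / 2) ^ 2 + (2 * (β * (β - 1)) * (β ^ 2 - 5 * β + 7) - (β ^ 2 - β + 1)) / 4) := by
    rw [coeffA, psi2, coeffE]
    field_simp
    ring
  have coeffD_ge : 3 / 4 ≤ β ^ 2 - 5 * β + 7 := by linarith [sq_nonneg (β - 5 / 2)]
  have base_ge : 2 ≤ β * (β - 1) := by nlinarith
  have const_pos : 0 < 2 * (β * (β - 1)) * (β ^ 2 - 5 * β + 7) - (β ^ 2 - β + 1) := by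
    nlinarith
  rw [complete_square]
  exact mul_pos (coeffA_pos (by linarith)) (by positivity)

lemma psi4Plus_lt_iff {x : ℝ} (hβ : 1 < β) (hx : 0 < 2 * coeffA β * x + coeffE β u) :
    psi4Plus β π₅ u g < x ↔ levelJ β π₅ g < formPhi β u x := by
  rw [psi4Plus, upperRoot_lt_iff (coeffA_pos hβ) hx, formPhi, lt_sub_iff_add_lt]

lemma psi4Plus_eq_of_formPhi_eq {x : ℝ} (hβ : 1 < β) (hx : 0 ≤ 2 * coeffA β * x + coeffE β u)
    (h : formPhi β u x = levelJ β π₅ g) : psi4Plus β π₅ u g = x := by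
  rw [psi4Plus, ← h, formPhi, sub_add_cancel, upperRoot_eval (coeffA_pos hβ).ne' hx]

lemma gLower_pos (hβ : 1 < β) (hπ₅ : 0 < π₅) : 0 < gLower β π₅ := by
  have : 0 < β - 1 := by linarith
  rw [gLower]
  positivity

lemma gLower_pow_four (hβ : 1 < β) (hπ₅ : 0 ≤ π₅) :
    gLower β π₅ ^ 4 = 192 * β * π₅ / (β - 1) := by
  have rpow_quarter_pow {z : ℝ} (hz : 0 ≤ z) : (z ^ ((1 : ℝ) / 4)) ^ 4 = z := by
    simpa only [one_div, Nat.cast_ofNat] using Real.rpow_inv_natCast_pow hz four_ne_zero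
  have hβ1 : 0 < β - 1 := by linarith
  rw [gLower, mul_pow, mul_pow, rpow_quarter_pow (by positivity), rpow_quarter_pow hπ₅]
  field_simp
  ring

lemma levelJ_gLower (hβ : 1 < β) (hπ₅ : 0 < π₅) :
    levelJ β π₅ (gLower β π₅) =
      (β - 1) * (β - 1 - 1) * (4 * (β - 1) - 7) / 32 + (β - 1) / (32 * β) := by
  rw [levelJ, gLower_pow_four hβ hπ₅.le]
  field_simp
  ring

lemma levelJ_strictAntiOn (β : ℝ) (hπ₅ : 0 < π₅) : StrictAntiOn (levelJ β π₅) (Set.Ioi 0) := by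
  intro g₁ (hg₁ : 0 < g₁) g₂ _ hlt
  unfold levelJ
  gcongr

lemma formPhi_psi2 (hβ : 1 < β) (hπ₅ : 0 < π₅) (u : ℝ) :
    formPhi β u (psi2 β u) = levelJ β π₅ (gLower β π₅) +
      ((u - β / 2) ^ 2 - β / 4) * ((u - β / 2) ^ 2 - (β - 2) * (2 * β - 3) / 4) /
        (2 * β * (β - 1)) := by
  have hβ1 : β - 1 ≠ 0 := by linarith
  rw [levelJ_gLower hβ hπ₅, formPhi, coeffA, coeffC, coeffE, psi2]
  field_simp
  ring

lemma levelJ_gLower_le_formPhi_psi2 (hβ : 3 ≤ β) (hπ₅ : 0 < π₅)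
    (hu : (u - β / 2) ^ 2 ≤ β / 4) :
    levelJ β π₅ (gLower β π₅) ≤ formPhi β u (psi2 β u) := by
  have second_factor : (u - β / 2) ^ 2 ≤ (β - 2) * (2 * β - 3) / 4 := by
    linarith [mul_nonneg (sub_nonneg.2 hβ) (by linarith : 0 ≤ β - 1)]
  have denom_pos : 0 < 2 * β * (β - 1) := mul_pos (by linarith) (by linarith)
  rw [formPhi_psi2 (by linarith) hπ₅, le_add_iff_nonneg_right]
  exact div_nonneg
    (mul_nonneg_of_nonpos_of_nonpos (sub_nonpos.2 hu) (sub_nonpos.2 second_factor)) denom_pos.le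

lemma psi4Plus_lt_psi2 (hβ : 3 ≤ β) (hπ₅ : 0 < π₅) (hg : gLower β π₅ < g)
    (hu : (u - β / 2) ^ 2 ≤ β / 4) : psi4Plus β π₅ u g < psi2 β u := by
  have gs_pos : 0 < gLower β π₅ := gLower_pos (by linarith) hπ₅
  rw [psi4Plus_lt_iff (by linarith) (formPhi_deriv_psi2_pos (by linarith) u)]
  calc levelJ β π₅ g
      < levelJ β π₅ (gLower β π₅) :=
        levelJ_strictAntiOn β hπ₅ gs_pos (gs_pos.trans hg) hg
    _ ≤ formPhi β u (psi2 β u) := levelJ_gLower_le_formPhi_psi2 hβ hπ₅ hu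

lemma psi4Plus_gLower_eq_psi2 (hβ : 2 ≤ β) (hπ₅ : 0 < π₅) (hu : (u - β / 2) ^ 2 = β / 4) :
    psi4Plus β π₅ u (gLower β π₅) = psi2 β u := by
  refine psi4Plus_eq_of_formPhi_eq (by linarith) (formPhi_deriv_psi2_pos hβ u).le ?_
  rw [formPhi_psi2 (by linarith) hπ₅, hu, sub_self, zero_mul, zero_div, add_zero]

lemma uMinus_sub_half_sq (hβ : 0 ≤ β) : (uMinus β - β / 2) ^ 2 = β / 4 := by
  rw [uMinus]
  linarith [Real.sq_sqrt hβ]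

lemma psi2_of_sub_half_sq (hβ : β ≠ 0) (hu : (u - β / 2) ^ 2 = β / 4) :
    psi2 β u = (β - 1) / (2 * β) * u ^ 2 := by
  have quadratic_eq : u ^ 2 - β * u + β * (β - 1) / 4 = 0 := by linarith
  rw [psi2]
  field_simp
  linear_combination 4 * quadratic_eq

end MasterQuadratic

open MasterQuadratic in
theorem stmt_6_general {β π₅ : ℝ} (hβ : 3 ≤ β) (hπ₅ : 0 < π₅) :
    (∀ g, gLower β π₅ < g → ∀ u, |u - β / 2| ≤ √β / 2 → psi4Plus β π₅ u g < psi2 β u) ∧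
    psi4Plus β π₅ (uMinus β) (gLower β π₅) = (β - 1) / (2 * β) * uMinus β ^ 2 := by
  have hβ0 : 0 < β := by linarith
  have endpoint := uMinus_sub_half_sq hβ0.le
  refine ⟨fun g hg u hu ↦ psi4Plus_lt_psi2 hβ hπ₅ hg ?_, ?_⟩
  · calc (u - β / 2) ^ 2
        ≤ (√β / 2) ^ 2 := sq_le_sq' (abs_le.1 hu).1 (abs_le.1 hu).2
      _ = β / 4 := by rw [div_pow, Real.sq_sqrt hβ0.le]; norm_num
  · rw [psi4Plus_gLower_eq_psi2 (by linarith) hπ₅ endpoint,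
      psi2_of_sub_half_sq hβ0.ne' endpoint]

/-- Lemma 4, first part: for g > g_s, on the range u1⁻ ≤ u1 ≤ u_⊙ one has
Ψ4⁺(u1,g) < Ψ2(u1); and Ψ4⁺(u1⁻, g_s) = u2*. -/
theorem stmt_6 (β1 : ℕ) (hβ1 : 4 < β1)
    (π5 ε : ℝ) (hπ5 : 0 < π5) (hε1 : 0 < ε) (hε2 : ε ≤ Real.sqrt β1 / 2)
    (χ A B C D u1m u2s gs : ℝ)
    (hχ : χ = (β1 : ℝ) - 1)
    (hA : A = 2 / ((β1 : ℝ) * ((β1 : ℝ) - 1)))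
    (hB : B = 1 / (β1 : ℝ))
    (hC : C = ((β1 : ℝ) - 2) * ((β1 : ℝ) - 3) / 2)
    (hD : D = (β1 : ℝ) ^ 2 - 5 * (β1 : ℝ) + 7)
    (hu1m : u1m = ((β1 : ℝ) - Real.sqrt β1) / 2)
    (hu2s : u2s = χ / (2 * (β1 : ℝ)) * u1m ^ 2)
    (hgs : gs = 4 * (3 * (β1 : ℝ) / (4 * ((β1 : ℝ) - 1))) ^ ((1 : ℝ) / 4)
      * π5 ^ ((1 : ℝ) / 4))
    (J : ℝ → ℝ) (hJ : ∀ g, J g = χ * (χ - 1) * (4 * χ - 7) / 32 + 6 * π5 / g ^ 4)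
    (E : ℝ → ℝ) (hE : ∀ u1, E u1 = D - 2 * B * u1)
    (Ψ2 : ℝ → ℝ) (hΨ2 : ∀ u1, Ψ2 u1 = (1 / 2) * (u1 ^ 2 - u1 + χ / 4))
    (Ψ4p : ℝ → ℝ → ℝ)
    (hΨ4p : ∀ u1 g, Ψ4p u1 g =
      (Real.sqrt (E u1 ^ 2 + 4 * A * (J g + C * u1 * (u1 - 1))) - E u1) / (2 * A)) :
    (∀ g : ℝ, gs < g → ∀ u1 : ℝ, u1m ≤ u1 → u1 ≤ (β1 : ℝ) / 2 - ε →
      Ψ4p u1 g < Ψ2 u1) ∧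
    Ψ4p u1m gs = u2s := by
  subst hχ hA hB hC hD hu1m hu2s hgs
  obtain rfl : J = MasterQuadratic.levelJ β1 π5 := funext hJ
  obtain rfl : E = MasterQuadratic.coeffE β1 := funext hE
  obtain rfl : Ψ2 = MasterQuadratic.psi2 β1 := funext hΨ2
  obtain rfl : Ψ4p = MasterQuadratic.psi4Plus β1 π5 := funext₂ hΨ4p
  have hβ : (3 : ℝ) ≤ β1 := by exact_mod_cast (by omega : 3 ≤ β1)
  obtain ⟨lt_psi2, eq_endpoint⟩ := stmt_6_general hβ hπ5
  exact ⟨fun g hg u hl hr ↦ lt_psi2 g hg u (abs_le.2 ⟨by linarith, by linarith⟩), eq_endpoint⟩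
end

section
/- Let β1 > 4 be an integer, χ = β1 − 1, π5 > 0 a real, u1⁻ = (β1 − √β1)/2, Ψ2(u1) = (1/2)(u1² − u1 + χ/4), g_s = 4·(3β1/(4(β1−1)))^{1/4}·π5^{1/4}, and Ψ4⁺(u1,g) = (√(E(u1)² + 4A·(J(g) + C·u1·(u1−1))) − E(u1))/(2A) with A = 2/(β1(β1−1)), B = 1/β1, C = (β1−2)(β1−3)/2, D = β1² − 5β1 + 7, E(u1) = D − 2B·u1, J(g) = χ(χ−1)(4χ−7)/32 + 6π5/g⁴. If 0 < g < g_s, then there exists a real u1• > u1⁻ such that Ψ4⁺(u1,g) > Ψ2(u1) for every u1 with u1⁻ ≤ u1 < u1•. -/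
/-!
At `u1⁻`, where `(2 u - β1)² = β1`, the value `Φ(u, Ψ2(u))` is rational in `β1`: it exceeds the
constant part of `J` by exactly `(β1 - 1) / (32 β1)`. The threshold `g_s` is the value of `g` at
which the remaining part `6 π5 / g⁴` of `J(g)` equals this excess, so `g < g_s` means
`Φ(u1⁻, Ψ2(u1⁻)) < J(g)`. Since `Φ(u1⁻, ·)` has positive leading coefficient, `Ψ2(u1⁻)` then lies
below the larger root `Ψ4⁺(u1⁻, g)`, and by continuity this persists near `u1⁻`.
-/

open Filter Topology

section UpperRoot

/-- The larger root of `a y² + e y = c` for `0 < a`, provided the discriminant is nonnegative. -/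
noncomputable def upperRoot (a e c : ℝ) : ℝ :=
  (√(e ^ 2 + 4 * a * c) - e) / (2 * a)

theorem lt_upperRoot {a e c y : ℝ} (ha : 0 < a) (h : a * y ^ 2 + e * y < c) :
    y < upperRoot a e c := by
  have completed_square : (y * (2 * a) + e) ^ 2 < e ^ 2 + 4 * a * c := by
    linear_combination 4 * a * h
  rw [upperRoot, lt_div_iff₀ (by positivity), lt_sub_iff_add_lt]
  exact Real.lt_sqrt_of_sq_lt completed_square

@[fun_prop]
theorem continuous_upperRoot_comp {X : Type*} [TopologicalSpace X] (a : ℝ) {e c : X → ℝ}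
    (he : Continuous e) (hc : Continuous c) : Continuous fun x ↦ upperRoot a (e x) (c x) := by
  unfold upperRoot
  fun_prop

end UpperRoot

section MasterQuadratic

/-- The coefficient `A` of `y²` in the master quadratic `Φ(u, y)`; throughout, `b` is a real
parameter in place of the Betti number `β1`. -/
noncomputable def masterLeadCoeff (b : ℝ) : ℝ :=
  2 / (b * (b - 1))

/-- The coefficient `E(u)` of `y` in the master quadratic `Φ(u, y)`. -/
noncomputable def masterLinearCoeff (b u : ℝ) : ℝ :=
  b ^ 2 - 5 * b + 7 - 2 * (1 / b) * u

/-- The term `C u (u - 1)` of the master quadratic that does not involve `y`. -/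
noncomputable def masterConstTerm (b u : ℝ) : ℝ :=
  (b - 2) * (b - 3) / 2 * u * (u - 1)

/-- The master quadratic `Φ(u, y)`. -/
noncomputable def masterQuadratic (b u y : ℝ) : ℝ :=
  masterLeadCoeff b * y ^ 2 + masterLinearCoeff b u * y - masterConstTerm b u

/-- The part of the level `J(g)` that does not depend on `g`, with `χ = b - 1`. -/
noncomputable def masterBaseLevel (b : ℝ) : ℝ :=
  (b - 1) * (b - 1 - 1) * (4 * (b - 1) - 7) / 32

/-- The level `J(g)` in the master equation `Φ(u, y) = J(g)`, where `π5` is the product of the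
generators. -/
noncomputable def masterLevel (b π5 g : ℝ) : ℝ :=
  masterBaseLevel b + 6 * π5 / g ^ 4

/-- `Ψ4⁺(u, g)`, the positive root of the master equation `Φ(u, y) = J(g)`. -/
noncomputable def masterRoot (b π5 u g : ℝ) : ℝ :=
  upperRoot (masterLeadCoeff b) (masterLinearCoeff b u) (masterLevel b π5 g + masterConstTerm b u)

/-- `Ψ2(u)`, the bound of Lemma 2. -/
noncomputable def lemmaTwoBound (b u : ℝ) : ℝ :=
  1 / 2 * (u ^ 2 - u + (b - 1) / 4)

/-- The left endpoint `u1⁻` of the range of `u`. -/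
noncomputable def leftEndpoint (b : ℝ) : ℝ :=
  (b - √b) / 2

/-- The candidate lower bound `g_s`. -/
noncomputable def thresholdBound (b π5 : ℝ) : ℝ :=
  4 * (3 * b / (4 * (b - 1))) ^ ((1 : ℝ) / 4) * π5 ^ ((1 : ℝ) / 4)

variable {b π5 g u y : ℝ}

theorem masterLeadCoeff_pos (hb : 1 < b) : 0 < masterLeadCoeff b := by
  have : 0 < b - 1 := sub_pos.2 hb
  unfold masterLeadCoeff
  positivity

theorem lt_masterRoot_of_masterQuadratic_lt (hb : 1 < b)
    (h : masterQuadratic b u y < masterLevel b π5 g) : y < masterRoot b π5 u g :=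
  lt_upperRoot (masterLeadCoeff_pos hb) (sub_lt_iff_lt_add.1 h)

theorem continuous_masterRoot (b π5 g : ℝ) : Continuous fun u ↦ masterRoot b π5 u g := by
  unfold masterRoot masterLinearCoeff masterConstTerm
  fun_prop

theorem continuous_lemmaTwoBound (b : ℝ) : Continuous (lemmaTwoBound b) := by
  unfold lemmaTwoBound
  fun_prop

theorem two_mul_leftEndpoint_sub_sq (hb : 0 ≤ b) : (2 * leftEndpoint b - b) ^ 2 = b := by
  rw [leftEndpoint]
  linear_combination Real.sq_sqrt hb

theorem masterQuadratic_lemmaTwoBound (hb₀ : b ≠ 0) (hb₁ : b ≠ 1) (hu : (2 * u - b) ^ 2 = b) :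
    masterQuadratic b u (lemmaTwoBound b u) = masterBaseLevel b + (b - 1) / (32 * b) := by
  obtain ⟨s, rfl⟩ : ∃ s, u = (b - s) / 2 := ⟨b - 2 * u, by ring⟩
  obtain rfl : b = s ^ 2 := by linear_combination -hu
  have hs : s ≠ 0 := ne_zero_pow two_ne_zero hb₀
  have hs₁ : s ^ 2 - 1 ≠ 0 := sub_ne_zero.2 hb₁
  simp only [masterQuadratic, masterLeadCoeff, masterLinearCoeff, masterConstTerm, lemmaTwoBound,
    masterBaseLevel]
  field_simp
  ring

theorem thresholdBound_nonneg (hb : 1 < b) (hπ5 : 0 ≤ π5) : 0 ≤ thresholdBound b π5 := by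
  have : 0 < b - 1 := sub_pos.2 hb
  unfold thresholdBound
  positivity

theorem thresholdBound_pow_four (hb : 1 < b) (hπ5 : 0 ≤ π5) :
    thresholdBound b π5 ^ 4 = 192 * b * π5 / (b - 1) := by
  have hb₁ : 0 < b - 1 := sub_pos.2 hb
  have fourth_root_pow {x : ℝ} (hx : 0 ≤ x) : (x ^ ((1 : ℝ) / 4)) ^ 4 = x := by
    simpa only [one_div, Nat.cast_ofNat] using Real.rpow_inv_natCast_pow hx four_ne_zero
  rw [thresholdBound, mul_pow, mul_pow, fourth_root_pow (by positivity), fourth_root_pow hπ5]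
  field_simp
  ring

theorem lt_thresholdBound_iff (hb : 1 < b) (hπ5 : 0 ≤ π5) (hg : 0 < g) :
    g < thresholdBound b π5 ↔ (b - 1) / (32 * b) < 6 * π5 / g ^ 4 := by
  have hb₁ : 0 < b - 1 := sub_pos.2 hb
  rw [← pow_lt_pow_iff_left₀ hg.le (thresholdBound_nonneg hb hπ5) four_ne_zero,
    thresholdBound_pow_four hb hπ5, lt_div_iff₀ hb₁,
    div_lt_div_iff₀ (by positivity) (by positivity)]
  ring_nf

theorem masterQuadratic_lemmaTwoBound_lt_masterLevel_iff (hb : 1 < b) (hπ5 : 0 ≤ π5) (hg : 0 < g)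
    (hu : (2 * u - b) ^ 2 = b) :
    masterQuadratic b u (lemmaTwoBound b u) < masterLevel b π5 g ↔ g < thresholdBound b π5 := by
  rw [masterQuadratic_lemmaTwoBound (by positivity) hb.ne' hu, masterLevel, add_lt_add_iff_left,
    lt_thresholdBound_iff hb hπ5 hg]

theorem stmt_7_general (hb : 1 < b) (hπ5 : 0 ≤ π5) (hg : 0 < g) (hlt : g < thresholdBound b π5) :
    ∀ᶠ u in 𝓝 (leftEndpoint b), lemmaTwoBound b u < masterRoot b π5 u g := by
  have at_endpoint :
      lemmaTwoBound b (leftEndpoint b) < masterRoot b π5 (leftEndpoint b) g :=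
    lt_masterRoot_of_masterQuadratic_lt hb <|
      (masterQuadratic_lemmaTwoBound_lt_masterLevel_iff hb hπ5 hg
        (two_mul_leftEndpoint_sub_sq (by positivity))).2 hlt
  exact (continuous_lemmaTwoBound b).continuousAt.eventually_lt
    (continuous_masterRoot b π5 g).continuousAt at_endpoint

end MasterQuadratic

/-- Lemma 4, second part: if 0 < g < g_s then Ψ4⁺(u1,g) > Ψ2(u1) on a nonempty
interval [u1⁻, u1•) to the right of u1⁻. -/
theorem stmt_7 (β1 : ℕ) (hβ1 : 4 < β1)
    (π5 g : ℝ) (hπ5 : 0 < π5)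
    (χ A B C D u1m gs : ℝ)
    (hχ : χ = (β1 : ℝ) - 1)
    (hA : A = 2 / ((β1 : ℝ) * ((β1 : ℝ) - 1)))
    (hB : B = 1 / (β1 : ℝ))
    (hC : C = ((β1 : ℝ) - 2) * ((β1 : ℝ) - 3) / 2)
    (hD : D = (β1 : ℝ) ^ 2 - 5 * (β1 : ℝ) + 7)
    (hu1m : u1m = ((β1 : ℝ) - Real.sqrt β1) / 2)
    (hgs : gs = 4 * (3 * (β1 : ℝ) / (4 * ((β1 : ℝ) - 1))) ^ ((1 : ℝ) / 4)
      * π5 ^ ((1 : ℝ) / 4))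
    (J : ℝ → ℝ) (hJ : ∀ g', J g' = χ * (χ - 1) * (4 * χ - 7) / 32 + 6 * π5 / g' ^ 4)
    (E : ℝ → ℝ) (hE : ∀ u1, E u1 = D - 2 * B * u1)
    (Ψ2 : ℝ → ℝ) (hΨ2 : ∀ u1, Ψ2 u1 = (1 / 2) * (u1 ^ 2 - u1 + χ / 4))
    (Ψ4p : ℝ → ℝ → ℝ)
    (hΨ4p : ∀ u1 g', Ψ4p u1 g' =
      (Real.sqrt (E u1 ^ 2 + 4 * A * (J g' + C * u1 * (u1 - 1))) - E u1) / (2 * A))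
    (hg0 : 0 < g) (hggs : g < gs) :
    ∃ u1b : ℝ, u1m < u1b ∧
      ∀ u1 : ℝ, u1m ≤ u1 → u1 < u1b → Ψ2 u1 < Ψ4p u1 g := by
  subst hχ hA hB hC hD hu1m hgs
  obtain rfl : J = masterLevel β1 π5 := funext hJ
  obtain rfl : E = masterLinearCoeff β1 := funext hE
  obtain rfl : Ψ2 = lemmaTwoBound β1 := funext hΨ2
  obtain rfl : Ψ4p = masterRoot β1 π5 := funext₂ hΨ4p
  have hb : (1 : ℝ) < β1 := by norm_cast; lia
  obtain ⟨u1b, hu1b, hsub⟩ := mem_nhdsGE_iff_exists_Ico_subset.1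
    (nhdsWithin_le_nhds (stmt_7_general hb hπ5.le hg0 hggs))
  exact ⟨u1b, hu1b, fun u1 h₁ h₂ ↦ hsub ⟨h₁, h₂⟩⟩
end

section
/- Let T ⊆ ℕ be a numerical semigroup with T ≠ ℕ, let a ≥ 2 and d ≥ 2 be natural numbers with gcd(a, d) = 1 and d ∈ T, and let S be the additive submonoid of ℕ generated by {a·t : t ∈ T} ∪ {d}. Then S is a numerical semigroup with S ≠ ℕ, and S is symmetric if and only if T is symmetric. -/
/-- The Frobenius number of a numerical semigroup: the largest natural number
not in the semigroup. -/
noncomputable def frobNum (S : AddSubmonoid ℕ) : ℕ := sSup {n : ℕ | n ∉ S}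

/-- A numerical semigroup is symmetric if, for every gap n, the difference
F(S) − n belongs to the semigroup. -/
def IsSymmetricNS (S : AddSubmonoid ℕ) : Prop :=
  ∀ n : ℕ, n ∉ S → frobNum S - n ∈ S

/-!
Read membership in `ℤ`, with the convention `F(ℕ) = -1`. Every integer is `a x + k d` with
`0 ≤ k < a`, and since `d ∈ T` such an integer lies in `S = a T + ℕ d` exactly when `x ∈ T`.
Therefore `F(S) = a F(T) + (a - 1) d`, and the reflection `z ↦ F(S) - z` acts on these coordinates
as `(x, k) ↦ (F(T) - x, a - 1 - k)`: it exchanges gaps and elements of `S` if and only if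
`x ↦ F(T) - x` does so for `T`.
-/

/-- The gluing `a T + ℕ d` of a submonoid `T` of `ℤ` along `a` and `d`. -/
def glue (T : AddSubmonoid ℤ) (a d : ℤ) : AddSubmonoid ℤ :=
  T.map (AddMonoidHom.mulLeft a) ⊔ AddSubmonoid.multiples d

/-- Symmetry of a submonoid of `ℤ` with respect to `z ↦ f - z`. The integer `f` is arbitrary; for a
numerical semigroup it is the Frobenius number. -/
def IsSymmetricAbout (S : AddSubmonoid ℤ) (f : ℤ) : Prop :=
  ∀ z ∉ S, f - z ∈ S

/-- A submonoid of `ℕ` viewed in `ℤ`, so that negative integers count as gaps; the largest gap of a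
numerical semigroup then always exists, and equals `-1` for `ℕ` itself. -/
def intImage (S : AddSubmonoid ℕ) : AddSubmonoid ℤ :=
  S.map (Nat.castAddMonoidHom ℤ)

section Gluing

variable {T : AddSubmonoid ℤ} {a d : ℤ}

lemma mem_glue {z : ℤ} : z ∈ glue T a d ↔ ∃ t ∈ T, ∃ k : ℕ, a * t + k * d = z := by
  simp [glue, AddSubmonoid.mem_sup, AddSubmonoid.mem_multiples_iff]

lemma exists_mul_add_mul_eq (ha : 0 < a) (hcop : IsCoprime a d) (z : ℤ) :
    ∃ x k : ℤ, 0 ≤ k ∧ k < a ∧ a * x + k * d = z := by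
  obtain ⟨u, v, huv⟩ := hcop
  refine ⟨u * z + d * (v * z / a), v * z % a, Int.emod_nonneg _ ha.ne', Int.emod_lt_of_pos _ ha, ?_⟩
  linear_combination z * huv + d * Int.emod_add_mul_ediv (v * z) a

lemma mul_add_mul_mem_glue_iff (hcop : IsCoprime a d) (hdT : d ∈ T) {x k : ℤ}
    (hk : 0 ≤ k) (hka : k < a) : a * x + k * d ∈ glue T a d ↔ x ∈ T := by
  rw [mem_glue]
  constructor
  · rintro ⟨t, ht, j, hj⟩
    obtain ⟨q, hq⟩ : a ∣ j - k :=
      hcop.dvd_of_dvd_mul_right ⟨x - t, by linear_combination hj⟩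
    have hq_nonneg : 0 ≤ q := by
      have : a * (-1) < a * q := by lia
      have := lt_of_mul_lt_mul_left this (by lia)
      lia
    have hx : x = t + q * d :=
      mul_left_cancel₀ (show a ≠ 0 by lia) (by linear_combination d * hq - hj)
    lift q to ℕ using hq_nonneg
    rw [hx, ← nsmul_eq_mul]
    exact T.add_mem ht (T.nsmul_mem hdT q)
  · intro hx
    lift k to ℕ using hk
    exact ⟨x, hx, k, rfl⟩

lemma isGreatest_compl_glue (ha : 0 < a) (hd : 0 ≤ d) (hcop : IsCoprime a d) (hdT : d ∈ T)
    {f : ℤ} (hf : IsGreatest (T : Set ℤ)ᶜ f) :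
    IsGreatest (glue T a d : Set ℤ)ᶜ (a * f + (a - 1) * d) := by
  constructor
  · exact (mul_add_mul_mem_glue_iff hcop hdT (by lia) (by lia)).not.mpr hf.1
  · intro z hz
    obtain ⟨x, k, hk, hka, rfl⟩ := exists_mul_add_mul_eq ha hcop z
    have hxf : x ≤ f := hf.2 ((mul_add_mul_mem_glue_iff hcop hdT hk hka).not.mp hz)
    have hka' : k ≤ a - 1 := by lia
    gcongr

lemma isSymmetricAbout_glue_iff (ha : 0 < a) (hcop : IsCoprime a d) (hdT : d ∈ T) (f : ℤ) :
    IsSymmetricAbout (glue T a d) (a * f + (a - 1) * d) ↔ IsSymmetricAbout T f := by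
  have reflect_mem_iff {x k : ℤ} (hk : 0 ≤ k) (hka : k < a) :
      a * f + (a - 1) * d - (a * x + k * d) ∈ glue T a d ↔ f - x ∈ T := by
    rw [← mul_add_mul_mem_glue_iff hcop hdT (show 0 ≤ a - 1 - k by lia) (by lia)]
    ring_nf
  constructor
  · intro h x hx
    rw [← reflect_mem_iff le_rfl ha]
    exact h _ ((mul_add_mul_mem_glue_iff hcop hdT le_rfl ha).not.mpr hx)
  · intro h z hz
    obtain ⟨x, k, hk, hka, rfl⟩ := exists_mul_add_mul_eq ha hcop z
    rw [reflect_mem_iff hk hka]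
    exact h x ((mul_add_mul_mem_glue_iff hcop hdT hk hka).not.mp hz)

end Gluing

section IntImage

variable {S : AddSubmonoid ℕ}

lemma natCast_mem_intImage {n : ℕ} : (n : ℤ) ∈ intImage S ↔ n ∈ S := by
  simp [intImage]

lemma nonneg_of_mem_intImage {z : ℤ} (hz : z ∈ intImage S) : 0 ≤ z := by
  obtain ⟨n, -, rfl⟩ := hz
  exact Int.natCast_nonneg n

lemma neg_one_notMem_intImage : -1 ∉ intImage S :=
  fun h => absurd (nonneg_of_mem_intImage h) (by decide)

lemma bddAbove_compl_intImage_iff :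
    BddAbove (intImage S : Set ℤ)ᶜ ↔ (S : Set ℕ)ᶜ.Finite := by
  rw [Set.finite_iff_bddAbove]
  constructor
  · rintro ⟨b, hb⟩
    refine ⟨b.toNat, fun n hn => ?_⟩
    have : (n : ℤ) ≤ b := hb (natCast_mem_intImage.not.mpr hn)
    lia
  · rintro ⟨b, hb⟩
    refine ⟨b, fun z hz => ?_⟩
    by_contra! hbz
    lift z to ℕ using by lia
    have : z ≤ b := hb (natCast_mem_intImage.not.mp hz)
    lia

lemma exists_isGreatest_compl_intImage (hS : (S : Set ℕ)ᶜ.Finite) :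
    ∃ f, IsGreatest (intImage S : Set ℤ)ᶜ f :=
  have hbdd := bddAbove_compl_intImage_iff.mpr hS
  ⟨_, Int.csSup_mem ⟨-1, neg_one_notMem_intImage⟩ hbdd, fun _ => le_csSup hbdd⟩

lemma frobNum_eq_of_isGreatest {n : ℕ} (hn : IsGreatest (intImage S : Set ℤ)ᶜ n) :
    frobNum S = n :=
  IsGreatest.csSup_eq ⟨natCast_mem_intImage.not.mp hn.1,
    fun _ hm => Int.ofNat_le.mp (hn.2 (natCast_mem_intImage.not.mpr hm))⟩

lemma isSymmetricNS_iff_isSymmetricAbout {f : ℤ} (hf : IsGreatest (intImage S : Set ℤ)ᶜ f) :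
    IsSymmetricNS S ↔ IsSymmetricAbout (intImage S) f := by
  have reflect_mem_iff {n : ℕ} (hn : n ∉ S) : f - n ∈ intImage S ↔ frobNum S - n ∈ S := by
    have hnf : (n : ℤ) ≤ f := hf.2 (natCast_mem_intImage.not.mpr hn)
    lift f to ℕ using by lia
    rw [frobNum_eq_of_isGreatest hf, ← natCast_mem_intImage, Int.ofNat_sub (by lia)]
  constructor
  · intro h z hz
    rcases lt_or_ge z 0 with hneg | hnonneg
    · by_contra hgap
      have : f - z ≤ f := hf.2 hgap
      lia
    · lift z to ℕ using hnonneg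
      have hzS : z ∉ S := natCast_mem_intImage.not.mp hz
      exact (reflect_mem_iff hzS).mpr (h z hzS)
  · intro h n hn
    exact (reflect_mem_iff hn).mp (h n (natCast_mem_intImage.not.mpr hn))

lemma intImage_closure_image_mul_union_singleton (T : AddSubmonoid ℕ) (a d : ℕ) :
    intImage (AddSubmonoid.closure ((fun t => a * t) '' (T : Set ℕ) ∪ {d})) =
      glue (intImage T) a d := by
  have himage : AddSubmonoid.closure ((fun t => a * t) '' (T : Set ℕ)) =
      T.map (AddMonoidHom.mulLeft a) :=
    AddSubmonoid.closure_eq (T.map (AddMonoidHom.mulLeft a))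
  have hcomm : (Nat.castAddMonoidHom ℤ).comp (AddMonoidHom.mulLeft a) =
      (AddMonoidHom.mulLeft (a : ℤ)).comp (Nat.castAddMonoidHom ℤ) := by
    ext; simp
  rw [AddSubmonoid.closure_union, himage, intImage, AddSubmonoid.map_sup, AddSubmonoid.map_map,
    hcomm, AddMonoidHom.map_mclosure, Set.image_singleton, Nat.coe_castAddMonoidHom,
    ← AddSubmonoid.multiples_eq_closure, glue, intImage, AddSubmonoid.map_map]

end IntImage

/-- For `T = ⊤` this contains Sylvester's theorem that `⟨a, d⟩` is symmetric. -/
theorem stmt_10_general (T : AddSubmonoid ℕ) (hTfin : ((T : Set ℕ)ᶜ).Finite)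
    (a d : ℕ) (ha : 2 ≤ a) (hd : 2 ≤ d) (hgcd : Nat.gcd a d = 1) (hdT : d ∈ T)
    (S : AddSubmonoid ℕ)
    (hS : S = AddSubmonoid.closure ((fun t => a * t) '' (T : Set ℕ) ∪ {d})) :
    ((S : Set ℕ)ᶜ).Finite ∧ S ≠ ⊤ ∧ (IsSymmetricNS S ↔ IsSymmetricNS T) := by
  have hSglue : intImage S = glue (intImage T) a d :=
    hS ▸ intImage_closure_image_mul_union_singleton T a d
  have hcop : IsCoprime (a : ℤ) d := Nat.isCoprime_iff_coprime.mpr hgcd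
  have ha_pos : (0 : ℤ) < a := by lia
  have hdT' : (d : ℤ) ∈ intImage T := natCast_mem_intImage.mpr hdT
  obtain ⟨f, hf⟩ := exists_isGreatest_compl_intImage hTfin
  have hF : IsGreatest (intImage S : Set ℤ)ᶜ (a * f + (a - 1) * d) :=
    hSglue ▸ isGreatest_compl_glue ha_pos (Int.natCast_nonneg d) hcop hdT' hf
  refine ⟨bddAbove_compl_intImage_iff.mp ⟨_, hF.2⟩, ?_, ?_⟩
  · have hf_ge : -1 ≤ f := hf.2 neg_one_notMem_intImage
    have hF_nonneg : (0 : ℤ) ≤ a * f + (a - 1) * d := by nlinarith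
    intro htop
    lift (a * f + (a - 1) * d : ℤ) to ℕ using hF_nonneg with F
    exact hF.1 (natCast_mem_intImage.mpr (htop ▸ AddSubmonoid.mem_top F))
  · rw [isSymmetricNS_iff_isSymmetricAbout hF, isSymmetricNS_iff_isSymmetricAbout hf, hSglue,
      isSymmetricAbout_glue_iff ha_pos hcop hdT']

/-- Watanabe's Lemma (symmetry statement): for T a numerical semigroup,
gcd(a,d) = 1, d ∈ T, the semigroup S = ⟨aT, d⟩ is a numerical semigroup
(≠ ℕ) which is symmetric iff T is symmetric. -/
theorem stmt_10 (T : AddSubmonoid ℕ)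
    (hTfin : ((T : Set ℕ)ᶜ).Finite) (hTne : T ≠ ⊤)
    (a d : ℕ) (ha : 2 ≤ a) (hd : 2 ≤ d)
    (hgcd : Nat.gcd a d = 1) (hdT : d ∈ T)
    (S : AddSubmonoid ℕ)
    (hS : S = AddSubmonoid.closure ((fun t => a * t) '' (T : Set ℕ) ∪ {d})) :
    ((S : Set ℕ)ᶜ).Finite ∧ S ≠ ⊤ ∧ (IsSymmetricNS S ↔ IsSymmetricNS T) := by
  exact stmt_10_general T hTfin a d ha hd hgcd hdT S hS
end

section
/- Let T ⊆ ℕ be a numerical semigroup with T ≠ ℕ, let a ≥ 2 and d ≥ 2 be natural numbers with gcd(a, d) = 1 and d ∈ T, and let S be the additive submonoid of ℕ generated by {a·t : t ∈ T} ∪ {d}. Then the Frobenius numbers satisfy F(S) = a·F(T) + (a − 1)·d. -/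
/-!
Write `S = ⟨aT, d⟩`. As `a` and `d` are coprime, every `n` is `a * m + k * d` for a unique
`k < a` and a unique integer `m`. Since `d ∈ T`, multiples of `a * d` can be moved from the second
term to the first, so `n ∈ S` exactly when `m ∈ T`. Hence the largest gap of `S` is obtained by
taking `m` and `k` as large as possible: `m = F(T)` and `k = a - 1`.
-/

/-- The Watanabe extension `⟨aT, d⟩` of `T`. No coprimality of `a` and `d` is built in, so it
need not be cofinite even when `T` is. -/
def watanabeExtension (T : AddSubmonoid ℕ) (a d : ℕ) : AddSubmonoid ℕ :=
  AddSubmonoid.closure ((fun t => a * t) '' (T : Set ℕ) ∪ {d})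

section

variable {T : AddSubmonoid ℕ} {a d : ℕ}

theorem mem_watanabeExtension {n : ℕ} :
    n ∈ watanabeExtension T a d ↔ ∃ t ∈ T, ∃ k, a * t + k * d = n := by
  have closure_image : AddSubmonoid.closure ((fun t => a * t) '' (T : Set ℕ)) =
      T.map (AddMonoidHom.mulLeft a) :=
    (T.map (AddMonoidHom.mulLeft a)).closure_eq
  simp only [watanabeExtension, AddSubmonoid.closure_union, closure_image, AddSubmonoid.mem_sup,
    AddSubmonoid.mem_map, AddMonoidHom.coe_mulLeft, AddSubmonoid.mem_closure_singleton,
    smul_eq_mul, exists_exists_and_eq_and, exists_exists_eq_and]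

theorem mul_add_mul_mem_watanabeExtension_iff (had : a.Coprime d) (hd : d ∈ T) {m k : ℕ}
    (hk : k < a) : a * m + k * d ∈ watanabeExtension T a d ↔ m ∈ T := by
  refine ⟨fun h ↦ ?_, fun hm ↦ mem_watanabeExtension.2 ⟨m, hm, k, rfl⟩⟩
  obtain ⟨t, ht, l, hl⟩ := mem_watanabeExtension.1 h
  have hmod : l ≡ k [MOD a] := by
    refine Nat.ModEq.cancel_right_of_coprime had ?_
    simpa [Nat.ModEq] using congrArg (· % a) hl
  have hkl : k ≤ l := (Nat.mod_eq_of_modEq hmod hk).symm.trans_le (Nat.mod_le l a)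
  obtain ⟨j, rfl⟩ := (Nat.modEq_iff_exists_eq_add hkl).1 hmod.symm
  have hm : m = t + j * d := Nat.eq_of_mul_eq_mul_left (k.zero_le.trans_lt hk) (by linarith)
  exact hm ▸ T.add_mem ht (T.nsmul_mem hd j)

theorem isGreatest_notMem_watanabeExtension (ha : a ≠ 0) (had : a.Coprime d) (hd : d ∈ T) {F : ℕ}
    (hF : IsGreatest {m | m ∉ T} F) :
    IsGreatest {n | n ∉ watanabeExtension T a d} (a * F + (a - 1) * d) := by
  refine ⟨(mul_add_mul_mem_watanabeExtension_iff had hd (Nat.sub_one_lt ha)).not.2 hF.1,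
    fun n hn ↦ ?_⟩
  obtain ⟨k, hka, hk⟩ := Nat.exists_mul_mod_eq_of_coprime n had.symm ha
  have hkd : k * d ≤ (a - 1) * d := Nat.mul_le_mul_right d (Nat.le_sub_one_of_lt hka)
  obtain hlt | hle := lt_or_ge n (k * d)
  · exact hlt.le.trans (hkd.trans (Nat.le_add_left _ _))
  · obtain ⟨m, rfl⟩ : ∃ m, n = k * d + a * m :=
      (Nat.modEq_iff_exists_eq_add hle).1 (mul_comm d k ▸ hk)
    rw [add_comm] at hn ⊢
    have hmF : m ≤ F := hF.2 ((mul_add_mul_mem_watanabeExtension_iff had hd hka).not.1 hn)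
    gcongr

end

theorem isGreatest_frobNum {S : AddSubmonoid ℕ} (hfin : ((S : Set ℕ)ᶜ).Finite) (hne : S ≠ ⊤) :
    IsGreatest {n | n ∉ S} (frobNum S) := by
  have hgap : {n | n ∉ S}.Nonempty := not_forall.1 (mt (AddSubmonoid.eq_top_iff' S).2 hne)
  exact ⟨Nat.sSup_mem hgap hfin.bddAbove, fun _ hn ↦ le_csSup hfin.bddAbove hn⟩

/-- Brauer's relation (64): the Frobenius number of the Watanabe extension
S = ⟨aT, d⟩ satisfies F(S) = a·F(T) + (a−1)·d. -/
theorem stmt_11 (T : AddSubmonoid ℕ)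
    (hTfin : ((T : Set ℕ)ᶜ).Finite) (hTne : T ≠ ⊤)
    (a d : ℕ) (ha : 2 ≤ a) (hd : 2 ≤ d)
    (hgcd : Nat.gcd a d = 1) (hdT : d ∈ T)
    (S : AddSubmonoid ℕ)
    (hS : S = AddSubmonoid.closure ((fun t => a * t) '' (T : Set ℕ) ∪ {d})) :
    frobNum S = a * frobNum T + (a - 1) * d := by
  subst hS
  have hgap := isGreatest_frobNum hTfin hTne
  exact (isGreatest_notMem_watanabeExtension (by lia) hgcd hdT hgap).csSup_eq
end

section
/- Let T ⊆ ℕ be the numerical semigroup generated by positive integers δ1, δ2, δ3, δ4 with gcd(δ1,δ2,δ3,δ4) = 1 and T ≠ ℕ, let a ≥ 2 and d ≥ 2 be natural numbers with gcd(a, d) = 1 and d ∈ T, and let S be the additive submonoid of ℕ generated by {a·δ1, a·δ2, a·δ3, a·δ4, d}. Write π4 = δ1·δ2·δ3·δ4. Assume the lower bound F(T) ≥ (25·π4)^{1/3} − (δ1+δ2+δ3+δ4) for the Frobenius number of T. Then the Frobenius number of S satisfies F(S) ≥ g_w − (a·(δ1+δ2+δ3+δ4) + d), where g_w = a·((25·π4)^{1/3}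 + d). -/
/-!
Let `T` be the semigroup generated by `s`, and `S` the one generated by `a • s` and `d ∈ T`, so that
`S` consists of the sums `k * d + a * t` with `t ∈ T`. Then `F(S) = a * F(T) + (a - 1) * d`.
If this number were `k * d + a * t`, adding `d` would give `(k + 1) * d + a * t = a * (F(T) + d)`,
so `k + 1 = a * (l + 1)` by coprimality, and `F(T) = t + l * d` would lie in `T`.
For a larger `n`, the choice of `k < a` with `k * d ≡ n [MOD a]` leaves `n - k * d = a * t`
with `t > F(T)`. A lower bound on `F(T)` therefore transfers to `F(S)`.
-/

theorem frobNum_closure_eq {n : ℕ} {s : Set ℕ} (h : FrobeniusNumber n s) :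
    frobNum (AddSubmonoid.closure s) = n :=
  IsGreatest.csSup_eq h

theorem exists_frobeniusNumber_of_closure_ne_top {s : Set ℕ} (hgcd : Nat.setGcd s = 1)
    (hne : AddSubmonoid.closure s ≠ ⊤) : ∃ n, FrobeniusNumber n s := by
  refine exists_frobeniusNumber_iff.mpr ⟨hgcd, fun one_mem ↦ hne ?_⟩
  rw [eq_top_iff, ← Nat.addSubmonoidClosure_one]
  exact AddSubmonoid.closure_mono (Set.singleton_subset_iff.mpr one_mem)

theorem setGcd_insert (n : ℕ) (s : Set ℕ) :
    Nat.setGcd (insert n s) = n.gcd (Nat.setGcd s) :=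
  eq_of_forall_dvd' fun k ↦ by
    simp only [Nat.dvd_gcd_iff, Nat.dvd_setGcd_iff, Set.forall_mem_insert]

theorem setGcd_singleton (n : ℕ) : Nat.setGcd {n} = n :=
  eq_of_forall_dvd' fun k ↦ by
    simp only [Nat.dvd_setGcd_iff, Set.mem_singleton_iff, forall_eq]

theorem mem_closure_insert_image {M N : Type*} [AddZeroClass M] [AddCommMonoid N] (f : M →+ N)
    {s : Set M} {d y : N} :
    y ∈ AddSubmonoid.closure (insert d (f '' s)) ↔
      ∃ k : ℕ, ∃ x ∈ AddSubmonoid.closure s, k • d + f x = y := by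
  simp only [Set.insert_eq, AddSubmonoid.closure_union, ← AddMonoidHom.map_mclosure,
    AddSubmonoid.mem_sup, AddSubmonoid.mem_closure_singleton, AddSubmonoid.mem_map,
    exists_exists_eq_and, exists_exists_and_eq_and]

theorem mem_closure_insert_image_mul {s : Set ℕ} {a d n : ℕ} :
    n ∈ AddSubmonoid.closure (insert d ((a * ·) '' s)) ↔
      ∃ k, ∃ t ∈ AddSubmonoid.closure s, k * d + a * t = n :=
  mem_closure_insert_image (AddMonoidHom.mulLeft a)

theorem exists_lt_mul_add_mul_eq {a d n : ℕ} (ha : a ≠ 0) (hcop : a.Coprime d)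
    (hn : (a - 1) * d ≤ n) : ∃ k < a, ∃ t, k * d + a * t = n := by
  obtain ⟨k, hk, hmod⟩ := Nat.exists_mul_mod_eq_of_coprime n hcop.symm ha
  have hkn : k * d ≤ n := (Nat.mul_le_mul_right d (Nat.le_sub_one_of_lt hk)).trans hn
  rw [mul_comm] at hmod
  obtain ⟨t, ht⟩ := (Nat.modEq_iff_dvd' hkn).mp hmod
  exact ⟨k, hk, t, by lia⟩

theorem mul_add_pred_mul_notMem_closure {s : Set ℕ} {a d n : ℕ} (ha : a ≠ 0)
    (hcop : a.Coprime d) (hd : d ∈ AddSubmonoid.closure s) (hn : n ∉ AddSubmonoid.closure s) :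
    a * n + (a - 1) * d ∉ AddSubmonoid.closure (insert d ((a * ·) '' s)) := by
  rw [mem_closure_insert_image_mul]
  rintro ⟨k, t, ht, hrep⟩
  have hshift : a * t + (k + 1) * d = a * (n + d) := by
    obtain ⟨b, rfl⟩ := Nat.exists_eq_add_one_of_ne_zero ha
    rw [Nat.add_sub_cancel] at hrep
    linarith
  have hdvd : a ∣ k + 1 := hcop.dvd_of_dvd_mul_right <|
    (Nat.dvd_add_right (dvd_mul_right a t)).mp ⟨n + d, hshift⟩
  obtain ⟨l, hl⟩ : ∃ l, k + 1 = a * (l + 1) := by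
    obtain ⟨_ | l, hl⟩ := hdvd
    · simp at hl
    · exact ⟨l, hl⟩
  have hn_eq : n = t + l * d := by
    refine Nat.eq_of_mul_eq_mul_left (Nat.pos_of_ne_zero ha) ?_
    rw [hl] at hshift
    linarith
  exact hn (hn_eq ▸ add_mem ht (nsmul_mem hd l))

theorem mem_closure_insert_image_mul_of_lt {s : Set ℕ} {a d f n : ℕ} (ha : a ≠ 0)
    (hcop : a.Coprime d) (hf : ∀ t > f, t ∈ AddSubmonoid.closure s)
    (hn : a * f + (a - 1) * d < n) :
    n ∈ AddSubmonoid.closure (insert d ((a * ·) '' s)) := by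
  obtain ⟨k, hk, t, rfl⟩ := exists_lt_mul_add_mul_eq (n := n) ha hcop (by lia)
  have hkd : k * d ≤ (a - 1) * d := Nat.mul_le_mul_right d (Nat.le_sub_one_of_lt hk)
  have hft : f < t := lt_of_mul_lt_mul_left (a := a) (by lia) a.zero_le
  exact mem_closure_insert_image_mul.mpr ⟨k, t, hf t hft, rfl⟩

theorem frobeniusNumber_insert_image_mul {s : Set ℕ} {a d f : ℕ} (ha : a ≠ 0)
    (hcop : a.Coprime d) (hd : d ∈ AddSubmonoid.closure s) (hf : FrobeniusNumber f s) :
    FrobeniusNumber (a * f + (a - 1) * d) (insert d ((a * ·) '' s)) := by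
  rw [frobeniusNumber_iff] at hf ⊢
  exact ⟨mul_add_pred_mul_notMem_closure ha hcop hd hf.1,
    fun _ ↦ mem_closure_insert_image_mul_of_lt ha hcop hf.2⟩

/-- Lemma 6: lower bound for the Frobenius number of the Watanabe extension
S = ⟨aδ1, aδ2, aδ3, aδ4, d⟩ of a 4-generated numerical semigroup T, assuming
the lower bound F(T) ≥ (25π4)^{1/3} − Σδj. -/
theorem stmt_12 (δ1 δ2 δ3 δ4 : ℕ)
    (h1 : 0 < δ1) (h2 : 0 < δ2) (h3 : 0 < δ3) (h4 : 0 < δ4)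
    (hgcd : Nat.gcd (Nat.gcd (Nat.gcd δ1 δ2) δ3) δ4 = 1)
    (T : AddSubmonoid ℕ)
    (hT : T = AddSubmonoid.closure {δ1, δ2, δ3, δ4})
    (hTne : T ≠ ⊤)
    (a d : ℕ) (ha : 2 ≤ a) (hd : 2 ≤ d)
    (hgcdad : Nat.gcd a d = 1) (hdT : d ∈ T)
    (S : AddSubmonoid ℕ)
    (hS : S = AddSubmonoid.closure {a * δ1, a * δ2, a * δ3, a * δ4, d})
    (hFT : (frobNum T : ℝ) ≥
      (25 * ((δ1 : ℝ) * δ2 * δ3 * δ4)) ^ ((1 : ℝ) / 3)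
        - ((δ1 : ℝ) + δ2 + δ3 + δ4)) :
    (frobNum S : ℝ) ≥
      (a : ℝ) * ((25 * ((δ1 : ℝ) * δ2 * δ3 * δ4)) ^ ((1 : ℝ) / 3) + (d : ℝ))
        - ((a : ℝ) * ((δ1 : ℝ) + δ2 + δ3 + δ4) + (d : ℝ)) := by
  subst hT
  have hsetGcd : Nat.setGcd {δ1, δ2, δ3, δ4} = 1 := by
    simpa only [setGcd_insert, setGcd_singleton, Nat.gcd_assoc] using hgcd
  obtain ⟨f, hf⟩ := exists_frobeniusNumber_of_closure_ne_top hsetGcd hTne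
  have hgens : ({a * δ1, a * δ2, a * δ3, a * δ4, d} : Set ℕ) =
      insert d ((a * ·) '' {δ1, δ2, δ3, δ4}) := by
    ext x
    simp only [Set.image_insert_eq, Set.image_singleton, Set.mem_insert_iff,
      Set.mem_singleton_iff]
    tauto
  have hFS : frobNum S = a * f + (a - 1) * d := by
    rw [hS, hgens]
    exact frobNum_closure_eq (frobeniusNumber_insert_image_mul (by lia) hgcdad hdT hf)
  rw [frobNum_closure_eq hf] at hFT
  have hmul := mul_le_mul_of_nonneg_left hFT (Nat.cast_nonneg (α := ℝ) a)
  rw [hFS]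
  push_cast [Nat.cast_sub (show 1 ≤ a by lia)]
  linarith
end

section
/- For all positive real numbers a, δ1, δ2, δ3, δ4 and d5, writing π4 = δ1·δ2·δ3·δ4, the strict inequality a·((25·π4)^{1/3} + d5) > 4·(9/10)^{1/4}·(a⁴·π4·d5)^{1/4} holds. Equivalently, g_w > g_s, where g_w = a((25π4)^{1/3} + d5) and g_s = 4·λ(6)·π5^{1/4} with λ(6) = (9/10)^{1/4} and π5 = (aδ1)(aδ2)(aδ3)(aδ4)·d5. -/
/-!
With `π₄ = δ₁δ₂δ₃δ₄`, weighted AM-GM with weights `3/4` and `1/4`, applied to `(25π₄)^{1/3}/3` and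
`d₅`, gives `(25π₄)^{1/3} + d₅ ≥ 4 (25π₄d₅/27)^{1/4}`. The scale `a` factors out of both sides,
and the inequality is strict because `9/10 · 27 < 25`.
-/

theorem add_mul_rpow_div_mul_rpow_div_le_add {p q x y : ℝ} (hp : 0 < p) (hq : 0 < q)
    (hx : 0 ≤ x) (hy : 0 ≤ y) :
    (p + q) * ((x / p) ^ (p / (p + q)) * (y / q) ^ (q / (p + q))) ≤ x + y := by
  have amgm := Real.geom_mean_le_arith_mean2_weighted
    (show 0 ≤ p / (p + q) by positivity) (show 0 ≤ q / (p + q) by positivity)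
    (show 0 ≤ x / p by positivity) (show 0 ≤ y / q by positivity) (by field_simp)
  calc
    (p + q) * ((x / p) ^ (p / (p + q)) * (y / q) ^ (q / (p + q)))
      ≤ (p + q) * (p / (p + q) * (x / p) + q / (p + q) * (y / q)) := by gcongr
    _ = x + y := by field_simp

theorem add_one_mul_rpow_inv_le_rpow_inv_add {p u y : ℝ} (hp : 0 < p) (hu : 0 ≤ u) (hy : 0 ≤ y) :
    (p + 1) * (u * y / p ^ p) ^ (p + 1)⁻¹ ≤ u ^ p⁻¹ + y := by
  have pow_root : (u ^ p⁻¹ / p) ^ p = u / p ^ p := by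
    rw [Real.div_rpow (by positivity) hp.le, Real.rpow_inv_rpow hu hp.ne']
  calc
    (p + 1) * (u * y / p ^ p) ^ (p + 1)⁻¹
      = (p + 1) * ((u ^ p⁻¹ / p) ^ (p / (p + 1)) * (y / 1) ^ (1 / (p + 1))) := by
        rw [mul_div_right_comm, ← pow_root, Real.mul_rpow (by positivity) hy,
          ← Real.rpow_mul (by positivity), ← div_eq_mul_inv, div_one, one_div]
    _ ≤ u ^ p⁻¹ + y :=
        add_mul_rpow_div_mul_rpow_div_le_add hp one_pos (by positivity) hy

theorem add_one_mul_rpow_inv_lt_rpow_inv_add {p b c u y : ℝ} (hp : 0 < p) (hb : 0 ≤ b)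
    (hbc : b * p ^ p < c) (hu : 0 < u) (hy : 0 < y) :
    (p + 1) * (b * (u * y)) ^ (p + 1)⁻¹ < (c * u) ^ p⁻¹ + y := by
  have c_pos : 0 < c := lt_of_le_of_lt (by positivity) hbc
  calc
    (p + 1) * (b * (u * y)) ^ (p + 1)⁻¹
      < (p + 1) * (c / p ^ p * (u * y)) ^ (p + 1)⁻¹ := by
        gcongr
        rwa [lt_div_iff₀ (by positivity)]
    _ = (p + 1) * (c * u * y / p ^ p) ^ (p + 1)⁻¹ := by
        rw [div_mul_eq_mul_div, mul_assoc c]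
    _ ≤ (c * u) ^ p⁻¹ + y :=
        add_one_mul_rpow_inv_le_rpow_inv_add hp (by positivity) hy.le

theorem rpow_inv_natCast_pow_mul {n : ℕ} {a x : ℝ} (hn : n ≠ 0) (ha : 0 ≤ a) (hx : 0 ≤ x) :
    (a ^ n * x) ^ (n : ℝ)⁻¹ = a * x ^ (n : ℝ)⁻¹ := by
  rw [Real.mul_rpow (by positivity) hx, Real.pow_rpow_inv_natCast ha hn]

/-- Proposition 4 (real form): g_w > g_s for the Watanabe construction, i.e.
a·((25·π4)^{1/3} + d5) > 4·(9/10)^{1/4}·(a⁴·π4·d5)^{1/4}. -/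
theorem stmt_13 (a δ1 δ2 δ3 δ4 d5 : ℝ)
    (ha : 0 < a) (h1 : 0 < δ1) (h2 : 0 < δ2) (h3 : 0 < δ3) (h4 : 0 < δ4)
    (hd5 : 0 < d5) :
    a * ((25 * (δ1 * δ2 * δ3 * δ4)) ^ ((1 : ℝ) / 3) + d5) >
      4 * ((9 : ℝ) / 10) ^ ((1 : ℝ) / 4)
        * (a ^ 4 * (δ1 * δ2 * δ3 * δ4) * d5) ^ ((1 : ℝ) / 4) := by
  have π4_pos : 0 < δ1 * δ2 * δ3 * δ4 := by positivity
  generalize δ1 * δ2 * δ3 * δ4 = π4 at π4_pos ⊢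
  have scale : (a ^ 4 * (π4 * d5)) ^ ((1 : ℝ) / 4) = a * (π4 * d5) ^ ((1 : ℝ) / 4) := by
    simpa using rpow_inv_natCast_pow_mul four_ne_zero ha.le (mul_pos π4_pos hd5).le
  have amgm : 4 * (9 / 10 * (π4 * d5)) ^ ((1 : ℝ) / 4) < (25 * π4) ^ ((1 : ℝ) / 3) + d5 := by
    convert add_one_mul_rpow_inv_lt_rpow_inv_add (p := 3) (b := 9 / 10) (c := 25)
      three_pos (by norm_num) (by norm_num) π4_pos hd5 using 2 <;> norm_num
  calc
    4 * ((9 : ℝ) / 10) ^ ((1 : ℝ) / 4) * (a ^ 4 * π4 * d5) ^ ((1 : ℝ) / 4)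
      = a * (4 * (((9 : ℝ) / 10) ^ ((1 : ℝ) / 4) * (π4 * d5) ^ ((1 : ℝ) / 4))) := by
        rw [mul_assoc (a ^ 4), scale]
        ring
    _ = a * (4 * (9 / 10 * (π4 * d5)) ^ ((1 : ℝ) / 4)) := by
        rw [Real.mul_rpow (x := 9 / 10) (by norm_num) (by positivity)]
    _ < a * ((25 * π4) ^ ((1 : ℝ) / 3) + d5) := by gcongr
end

section
/- Let n ≥ 2 be an integer and w1, …, wn positive real numbers, and let W_k denote the k-th elementary symmetric polynomial in w1, …, wn (with W_0 = 1). Then for every integer r with 1 ≤ r < n, one has W_1·W_r − (r+1)·W_{r+1} ≥ (r/n)·W_1·W_r. -/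
/-!
Write `e_r` for the elementary symmetric functions of a multiset `m` of nonnegative numbers. Double
counting gives `∑ a ∈ m, a * e_r (m - a) = (r + 1) * e_{r+1} m` and
`∑ a ∈ m, e_r (m - a) = (|m| - r) * e_r m`. Removing a larger element leaves a smaller `e_r`, so `a`
and `e_r (m - a)` vary in opposite directions, and Chebyshev's sum inequality for these two families
compares the two sums.
-/

section CommSemiring

variable {R : Type*} [CommSemiring R]

theorem esymm_zero (m : Multiset R) : m.esymm 0 = 1 := by
  simp [Multiset.esymm]

theorem esymm_one (m : Multiset R) : m.esymm 1 = m.sum := by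
  simp [Multiset.esymm, Multiset.powersetCard_one]

theorem esymm_empty_succ (k : ℕ) : (0 : Multiset R).esymm (k + 1) = 0 := by
  simp [Multiset.esymm, Multiset.powersetCard_zero_right]

theorem esymm_cons_succ (a : R) (m : Multiset R) (k : ℕ) :
    (a ::ₘ m).esymm (k + 1) = m.esymm (k + 1) + a * m.esymm k := by
  simp [Multiset.esymm, Multiset.powersetCard_cons, Multiset.sum_map_mul_left]

theorem esymm_eq_esymm_erase_add [DecidableEq R] {m : Multiset R} {a : R} (ha : a ∈ m) (k : ℕ) :
    m.esymm (k + 1) = (m.erase a).esymm (k + 1) + a * (m.erase a).esymm k := by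
  rw [← esymm_cons_succ, Multiset.cons_erase ha]

theorem sum_map_mul_esymm_erase [DecidableEq R] (m : Multiset R) (k : ℕ) :
    (m.map fun a ↦ a * (m.erase a).esymm k).sum = (k + 1) * m.esymm (k + 1) := by
  induction m using Multiset.induction_on generalizing k with
  | empty => simp [esymm_empty_succ]
  | cons a m ih =>
    have erase_cons : ∀ b ∈ m, b * ((a ::ₘ m).erase b).esymm k = b * (a ::ₘ m.erase b).esymm k :=
      fun b hb ↦ by rw [Multiset.erase_cons_tail_of_mem hb]
    rw [Multiset.map_cons, Multiset.sum_cons, Multiset.erase_cons_head,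
      Multiset.map_congr rfl erase_cons]
    cases k with
    | zero => simp [esymm_zero, esymm_one]
    | succ k =>
      simp only [esymm_cons_succ, mul_add, mul_left_comm _ a, Multiset.sum_map_add,
        Multiset.sum_map_mul_left, ih]
      push_cast
      ring

end CommSemiring

theorem sum_map_esymm_erase {R : Type*} [CommRing R] [DecidableEq R] (m : Multiset R) (k : ℕ) :
    (m.map fun a ↦ (m.erase a).esymm k).sum = (m.card - k) * m.esymm k := by
  cases k with
  | zero => simp [esymm_zero]
  | succ k =>
    have esymm_erase : ∀ a ∈ m,
        (m.erase a).esymm (k + 1) = m.esymm (k + 1) - a * (m.erase a).esymm k :=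
      fun a ha ↦ eq_sub_of_add_eq (esymm_eq_esymm_erase_add ha k).symm
    rw [Multiset.map_congr rfl esymm_erase, Multiset.sum_map_sub, sum_map_mul_esymm_erase]
    simp only [Multiset.map_const', Multiset.sum_replicate, nsmul_eq_mul]
    push_cast
    ring

section Order

variable {R : Type*} [CommSemiring R] [PartialOrder R] [IsOrderedRing R] {m : Multiset R}

theorem esymm_nonneg (hm : ∀ a ∈ m, 0 ≤ a) (k : ℕ) : 0 ≤ m.esymm k := by
  refine Multiset.sum_nonneg fun x hx ↦ ?_
  obtain ⟨t, ht, rfl⟩ := Multiset.mem_map.1 hx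
  have htm : t ≤ m := (Multiset.mem_powersetCard.1 ht).1
  exact Multiset.prod_nonneg fun a ha ↦ hm a (Multiset.mem_of_le htm ha)

theorem esymm_cons_le_esymm_cons (hm : ∀ a ∈ m, 0 ≤ a) {a b : R} (hab : a ≤ b) (k : ℕ) :
    (a ::ₘ m).esymm k ≤ (b ::ₘ m).esymm k := by
  cases k with
  | zero => simp only [esymm_zero, le_refl]
  | succ k =>
    rw [esymm_cons_succ, esymm_cons_succ]
    have := esymm_nonneg hm k
    gcongr

theorem antitoneOn_esymm_erase [DecidableEq R] (hm : ∀ a ∈ m, 0 ≤ a) (k : ℕ) :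
    AntitoneOn (fun a ↦ (m.erase a).esymm k) {a | a ∈ m} := by
  intro a ha b hb hab
  obtain rfl | hne := eq_or_ne a b
  · rfl
  have hrest : ∀ c ∈ (m.erase a).erase b, 0 ≤ c := fun c hc ↦
    hm c (Multiset.mem_of_mem_erase (Multiset.mem_of_mem_erase hc))
  have hea : m.erase a = b ::ₘ (m.erase a).erase b :=
    (Multiset.cons_erase ((Multiset.mem_erase_of_ne hne.symm).2 hb)).symm
  have heb : m.erase b = a ::ₘ (m.erase a).erase b := by
    rw [Multiset.erase_comm, Multiset.cons_erase ((Multiset.mem_erase_of_ne hne).2 ha)]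
  simpa only [← hea, ← heb] using esymm_cons_le_esymm_cons hrest hab k

end Order

theorem card_mul_sum_map_mul_le_of_antivaryOn {ι R : Type*} [Semiring R] [LinearOrder R]
    [IsStrictOrderedRing R] [ExistsAddOfLE R] {m : Multiset ι} {f g : ι → R}
    (hfg : AntivaryOn f g {i | i ∈ m}) :
    m.card * (m.map fun i ↦ f i * g i).sum ≤ (m.map f).sum * (m.map g).sum := by
  classical
  have hanti : Antivary (fun i : m ↦ f i) (fun i : m ↦ g i) := fun i j hij ↦
    hfg Multiset.coe_mem Multiset.coe_mem hij
  have sum_coe (h : ι → R) : ∑ i : m, h i = (m.map h).sum :=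
    congrArg Multiset.sum (Multiset.map_univ m h)
  simpa only [← sum_coe, Multiset.card_coe] using hanti.card_mul_sum_le_sum_mul_sum

theorem stmt_15_general {R : Type*} [CommRing R] [LinearOrder R] [IsStrictOrderedRing R]
    {m : Multiset R} (hm : ∀ a ∈ m, 0 ≤ a) (r : ℕ) :
    r * (m.esymm 1 * m.esymm r) ≤
      m.card * (m.esymm 1 * m.esymm r - (r + 1) * m.esymm (r + 1)) := by
  have hanti : AntivaryOn id (fun a ↦ (m.erase a).esymm r) {a | a ∈ m} :=
    monotoneOn_id.antivaryOn (antitoneOn_esymm_erase hm r)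
  have chebyshev : m.card * ((r + 1) * m.esymm (r + 1)) ≤
      m.esymm 1 * ((m.card - r) * m.esymm r) := by
    simpa only [id_eq, Multiset.map_id', sum_map_mul_esymm_erase, sum_map_esymm_erase, esymm_one]
      using card_mul_sum_map_mul_le_of_antivaryOn hanti
  linear_combination chebyshev

/-- Inequality (23): a consequence of the Newton–Maclaurin inequalities for
elementary symmetric polynomials of positive reals. -/
theorem stmt_15 (n : ℕ) (hn : 2 ≤ n) (w : Fin n → ℝ) (hw : ∀ i, 0 < w i)
    (W : ℕ → ℝ)
    (hW : ∀ k, W k = ∑ t ∈ Finset.powersetCard k (Finset.univ : Finset (Fin n)),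
      ∏ i ∈ t, w i)
    (r : ℕ) (hr1 : 1 ≤ r) (hrn : r < n) :
    W 1 * W r - ((r : ℝ) + 1) * W (r + 1) ≥ ((r : ℝ) / (n : ℝ)) * (W 1 * W r) := by
  have hm : ∀ a ∈ Finset.univ.val.map w, 0 ≤ a := by simpa using fun i ↦ (hw i).le
  have hn_pos : (0 : ℝ) < n := by positivity
  rw [ge_iff_le, div_mul_eq_mul_div, div_le_iff₀' hn_pos]
  simpa only [hW, Finset.esymm_map_val, Multiset.card_map, Finset.card_val, Finset.card_univ,
    Fintype.card_fin] using stmt_15_general hm r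
end
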